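/- arXiv:2409.09745 — 6 statements merged into one kernel-verified Lean document; each statement's English description precedes it below -/
import Mathlib

section
/- Fix d ≥ 1, T ≥ 1, reals λ₁ ≥ … ≥ λ_d > 0, σ > 0, and positive thresholds w̄^{(1)},…,w̄^{(d)}. Let I = { i ∈ {1,…,d} : λ_i (w̄^{(i)})² ≥ σ²/T }. Consider the Gaussian sequence observation model with parameter w*, and let ŵ be any estimator, i.e., any measurable map of the T observations (and possibly an additional independent source of randomness) into ℝ^d. Then sup over all w* ∈ ℝ^d with |w*^{(i)}| ≤ w̄^{(i)} for every i of the expected excess risk E[ ½ Σ_{i=1}^d λ_i (ŵ^{(i)} − w*^{(i)})² ] is at least (1/8) ( |I| σ²/T + Σ_{i∉I} λ_i (w̄^{(i)})² ). -/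
open MeasureTheory ProbabilityTheory

noncomputable section

/-- The joint law of the `T` observations in the Gaussian sequence observation model:
`X_0, …, X_{T−1}` are i.i.d. random vectors in `ℝ^d` with independent coordinates
`X_t^{(i)} ∼ N(λ_i w^{(i)}, λ_i σ²)`. -/
def obsLaw (d T : ℕ) (lam : Fin d → ℝ) (σ : ℝ) (w : Fin d → ℝ) :
    Measure (Fin T → Fin d → ℝ) :=
  Measure.pi fun _ : Fin T => Measure.pi fun i : Fin d =>
    gaussianReal (lam i * w i) (Real.toNNReal (lam i * σ ^ 2))

/-!
Assouad's method. Shrink the box to half-widths `a i` with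
`lam i * a i ^ 2 = min (σ ^ 2 / T) (lam i * wbar i ^ 2)` and consider only its vertices. Two
vertices that differ in the sign of coordinate `i` have likelihood ratios, relative to their
midpoint, whose product is the constant `exp (-T * lam i * a i ^ 2 / σ ^ 2) ≥ exp (-1) ≥ 1 / 4`.
Hence no estimator does well at both: its mean squared errors in coordinate `i` add up to at least
`a i ^ 2 / 2`. Averaged over all vertices, each coordinate therefore costs at least `a i ^ 2 / 4`,
and the weight `lam i / 2` turns this into `lam i * a i ^ 2 / 8`.
-/

theorem lintegral_pi_prod {κ : Type*} [Fintype κ] {X : κ → Type*} [∀ i, MeasurableSpace (X i)]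
    {μ : ∀ i, Measure (X i)} [∀ i, IsProbabilityMeasure (μ i)] {f : ∀ i, X i → ENNReal}
    (hf : ∀ i, Measurable (f i)) :
    ∫⁻ x, ∏ i, f i (x i) ∂Measure.pi μ = ∏ i, ∫⁻ y, f i y ∂μ i := by
  rw [lintegral_prod_eq_prod_lintegral_of_indepFun _ (fun i (x : ∀ i, X i) ↦ f i (x i))
    (iIndepFun_pi fun i ↦ (hf i).aemeasurable) fun i ↦ (hf i).comp (measurable_pi_apply i)]
  exact Finset.prod_congr rfl fun i _ ↦ (measurePreserving_eval μ i).lintegral_comp (hf i)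

theorem pi_withDensity {κ : Type*} [Fintype κ] {X : κ → Type*} [∀ i, MeasurableSpace (X i)]
    {μ : ∀ i, Measure (X i)} [∀ i, IsProbabilityMeasure (μ i)] {f : ∀ i, X i → ENNReal}
    [∀ i, SigmaFinite ((μ i).withDensity (f i))] (hf : ∀ i, Measurable (f i)) :
    Measure.pi (fun i ↦ (μ i).withDensity (f i))
      = (Measure.pi μ).withDensity fun x ↦ ∏ i, f i (x i) := by
  refine Measure.pi_eq fun s hs ↦ ?_
  have prod_indicator (x : ∀ i, X i) :
      (Set.univ.pi s).indicator (fun x ↦ ∏ i, f i (x i)) x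
        = ∏ i, (s i).indicator (f i) (x i) := by
    classical
    simp only [Set.indicator_apply, Set.mem_univ_pi, Finset.prod_ite_zero, Finset.mem_univ,
      true_imp_iff]
  rw [withDensity_apply _ (.univ_pi hs), ← lintegral_indicator (.univ_pi hs)]
  simp_rw [prod_indicator]
  rw [lintegral_pi_prod fun i ↦ (hf i).indicator (hs i)]
  refine Finset.prod_congr rfl fun i _ ↦ ?_
  rw [lintegral_indicator (hs i), withDensity_apply _ (hs i)]

theorem pi_withDensity_ofReal_exp {κ : Type*} [Fintype κ] {X : κ → Type*}
    [∀ i, MeasurableSpace (X i)] {μ : ∀ i, Measure (X i)} [∀ i, IsProbabilityMeasure (μ i)]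
    {g : ∀ i, X i → ℝ} (hg : ∀ i, Measurable (g i)) :
    Measure.pi (fun i ↦ (μ i).withDensity fun x ↦ ENNReal.ofReal (Real.exp (g i x)))
      = (Measure.pi μ).withDensity fun x ↦ ENNReal.ofReal (Real.exp (∑ i, g i (x i))) := by
  have sigmaFinite_tilt (i : κ) :
      SigmaFinite ((μ i).withDensity fun x ↦ ENNReal.ofReal (Real.exp (g i x))) :=
    .withDensity_of_ne_top' fun _ ↦ ENNReal.ofReal_ne_top
  rw [pi_withDensity fun i ↦ (hg i).exp.ennreal_ofReal]
  simp only [Real.exp_sum, ENNReal.ofReal_prod_of_nonneg fun _ _ ↦ (Real.exp_pos _).le]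

theorem gaussianReal_add_eq_withDensity (μ δ : ℝ) {v : NNReal} (hv : v ≠ 0) :
    gaussianReal (μ + δ) v = (gaussianReal μ v).withDensity
      fun x ↦ ENNReal.ofReal (Real.exp (δ * (x - μ) / v - δ ^ 2 / (2 * v))) := by
  have measurable_ratio : Measurable fun x ↦
      ENNReal.ofReal (Real.exp (δ * (x - μ) / v - δ ^ 2 / (2 * v))) := by fun_prop
  rw [gaussianReal_of_var_ne_zero _ hv, gaussianReal_of_var_ne_zero _ hv,
    ← withDensity_mul _ (measurable_gaussianPDF μ v) measurable_ratio]
  congr with x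
  simp only [Pi.mul_apply, gaussianPDF, gaussianPDFReal]
  rw [← ENNReal.ofReal_mul (by positivity), mul_assoc _ (Real.exp _), ← Real.exp_add]
  congr 3
  field_simp
  ring

theorem mul_sq_le_mul_sub_sq_add_mul_add_sq {κ p q : ℝ} (hp : 0 ≤ p) (hκ : 0 < κ)
    (hpq : κ ≤ p * q) (b y : ℝ) :
    4 * κ * b ^ 2 ≤ p * ((y - b) ^ 2 + κ * b ^ 2) + q * ((y + b) ^ 2 + κ * b ^ 2) := by
  have add_pos : 0 < p + q := by nlinarith
  -- Minimizing over `y` leaves `4 * b ^ 2 * (p * q / (p + q))`, and `1 / (p + q)` lies above its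
  -- tangent `1 - (p + q) / 4` at `p + q = 2`, the value of `p + q` when both densities are `1`.
  have add_mul_gap_nonneg : 0 ≤ (p + q) * (p * ((y - b) ^ 2 + κ * b ^ 2)
      + q * ((y + b) ^ 2 + κ * b ^ 2) - 4 * κ * b ^ 2) := by
    have := sub_nonneg.2 hpq
    calc 0 ≤ ((p + q) * y + (q - p) * b) ^ 2 + 4 * b ^ 2 * (p * q - κ)
          + κ * b ^ 2 * (p + q - 2) ^ 2 := by positivity
      _ = _ := by ring
  linarith [nonneg_of_mul_nonneg_right add_mul_gap_nonneg add_pos]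

theorem lintegral_ofReal_add_const {Ω : Type*} [MeasurableSpace Ω] (μ : Measure Ω)
    [IsProbabilityMeasure μ] {f : Ω → ℝ} (hf : ∀ x, 0 ≤ f x) {c : ℝ} (hc : 0 ≤ c) :
    ∫⁻ x, ENNReal.ofReal (f x + c) ∂μ = ∫⁻ x, ENNReal.ofReal (f x) ∂μ + ENNReal.ofReal c := by
  simp_rw [ENNReal.ofReal_add (hf _) hc]
  rw [lintegral_add_right _ measurable_const, lintegral_const, measure_univ, mul_one]

theorem two_point_lower_bound {Ω : Type*} [MeasurableSpace Ω] {P P₁ P₂ : Measure Ω}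
    [IsProbabilityMeasure P] [IsProbabilityMeasure P₁] [IsProbabilityMeasure P₂]
    {p q : Ω → ℝ} (hp : Measurable p) (hq : Measurable q)
    (hP₁ : P₁ = P.withDensity fun x ↦ ENNReal.ofReal (p x))
    (hP₂ : P₂ = P.withDensity fun x ↦ ENNReal.ofReal (q x))
    {κ : ℝ} (hκ : 0 < κ) (hp_nonneg : ∀ x, 0 ≤ p x) (hpq : ∀ x, κ ≤ p x * q x)
    {Y : Ω → ℝ} (hY : Measurable Y) (b : ℝ) :
    ENNReal.ofReal (2 * κ * b ^ 2) ≤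
      ∫⁻ x, ENNReal.ofReal ((Y x - b) ^ 2) ∂P₁ + ∫⁻ x, ENNReal.ofReal ((Y x + b) ^ 2) ∂P₂ := by
  set R₁ := ∫⁻ x, ENNReal.ofReal ((Y x - b) ^ 2) ∂P₁
  set R₂ := ∫⁻ x, ENNReal.ofReal ((Y x + b) ^ 2) ∂P₂
  set c := κ * b ^ 2 with hc
  have c_nonneg : 0 ≤ c := by positivity
  have q_nonneg (x : Ω) : 0 ≤ q x :=
    (pos_of_mul_pos_right (hκ.trans_le (hpq x)) (hp_nonneg x)).le
  have penalized : ENNReal.ofReal (4 * c) ≤ R₁ + ENNReal.ofReal c + (R₂ + ENNReal.ofReal c) := by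
    calc ENNReal.ofReal (4 * c)
        = ∫⁻ _, ENNReal.ofReal (4 * c) ∂P := by rw [lintegral_const, measure_univ, mul_one]
      _ ≤ ∫⁻ x, (ENNReal.ofReal (p x) * ENNReal.ofReal ((Y x - b) ^ 2 + c)
            + ENNReal.ofReal (q x) * ENNReal.ofReal ((Y x + b) ^ 2 + c)) ∂P := by
          refine lintegral_mono fun x ↦ ?_
          have := hp_nonneg x
          have := q_nonneg x
          rw [← ENNReal.ofReal_mul (hp_nonneg x), ← ENNReal.ofReal_mul (q_nonneg x),
            ← ENNReal.ofReal_add (by positivity) (by positivity), hc, ← mul_assoc]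
          exact ENNReal.ofReal_le_ofReal
            (mul_sq_le_mul_sub_sq_add_mul_add_sq (hp_nonneg x) hκ (hpq x) b (Y x))
      _ = ∫⁻ x, ENNReal.ofReal ((Y x - b) ^ 2 + c) ∂P₁
            + ∫⁻ x, ENNReal.ofReal ((Y x + b) ^ 2 + c) ∂P₂ := by
          rw [lintegral_add_left (by fun_prop), hP₁, hP₂,
            lintegral_withDensity_eq_lintegral_mul _ (by fun_prop) (by fun_prop),
            lintegral_withDensity_eq_lintegral_mul _ (by fun_prop) (by fun_prop)]
          rfl
      _ = R₁ + ENNReal.ofReal c + (R₂ + ENNReal.ofReal c) := by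
          rw [lintegral_ofReal_add_const P₁ (fun _ ↦ sq_nonneg _) c_nonneg,
            lintegral_ofReal_add_const P₂ (fun _ ↦ sq_nonneg _) c_nonneg]
  rw [add_add_add_comm, ← ENNReal.ofReal_add c_nonneg c_nonneg,
    (by ring : 4 * c = 2 * κ * b ^ 2 + (c + c)),
    ENNReal.ofReal_add (by positivity) (by positivity)] at penalized
  exact (ENNReal.add_le_add_iff_right ENNReal.ofReal_ne_top).1 penalized

theorem sum_le_two_mul_iSup_sum {ι α : Type*} [Fintype ι] [Finite α] [Nonempty α]
    (e : ι → Equiv.Perm α) (r : ι → α → ENNReal) (c : ι → ENNReal)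
    (h : ∀ i x, c i ≤ r i x + r i (e i x)) :
    ∑ i, c i ≤ 2 * ⨆ x, ∑ i, r i x := by
  have := Fintype.ofFinite α
  have card_mul_le (i : ι) : Fintype.card α * c i ≤ 2 * ∑ x, r i x := by
    calc Fintype.card α * c i = ∑ _x : α, c i := by simp
      _ ≤ ∑ x, (r i x + r i (e i x)) := Finset.sum_le_sum fun x _ ↦ h i x
      _ = 2 * ∑ x, r i x := by rw [Finset.sum_add_distrib, Equiv.sum_comp (e i), two_mul]
  refine (ENNReal.mul_le_mul_iff_right (Nat.cast_ne_zero.2 Fintype.card_ne_zero)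
    (ENNReal.natCast_ne_top (Fintype.card α))).1 ?_
  calc Fintype.card α * ∑ i, c i
      ≤ ∑ i, 2 * ∑ x, r i x := by
        rw [Finset.mul_sum]
        exact Finset.sum_le_sum fun i _ ↦ card_mul_le i
    _ = 2 * ∑ x, ∑ i, r i x := by rw [← Finset.mul_sum, Finset.sum_comm]
    _ ≤ 2 * ∑ _x : α, ⨆ x, ∑ i, r i x := by
        gcongr with x
        exact le_iSup (fun x ↦ ∑ i, r i x) x
    _ = Fintype.card α * (2 * ⨆ x, ∑ i, r i x) := by
        rw [Finset.sum_const, Finset.card_univ, nsmul_eq_mul, mul_left_comm]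

theorem sum_min_eq_card_mul_add_sum {ι : Type*} (s : Finset ι) (c : ℝ) (f : ι → ℝ) :
    ∑ i ∈ s, min c (f i)
      = (s.filter fun i ↦ c ≤ f i).card * c + ∑ i ∈ s with ¬ c ≤ f i, f i := by
  simp only [min_def, Finset.sum_ite, Finset.sum_const, nsmul_eq_mul]

/-- The vertex `(ε i * a i)ᵢ` of the box `∏ᵢ [-a i, a i]` selected by the signs `ε`. -/
def boxVertex {ι : Type*} (a : ι → ℝ) (ε : ι → ℤˣ) (i : ι) : ℝ := ((ε i : ℤ) : ℝ) * a i

theorem abs_boxVertex {ι : Type*} (a : ι → ℝ) (ε : ι → ℤˣ) (i : ι) : |boxVertex a ε i| = |a i| := by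
  rcases Int.units_eq_one_or (ε i) with h | h <;> simp [boxVertex, h]

theorem boxVertex_mulSingle_neg_one_mul {ι : Type*} [DecidableEq ι] (a : ι → ℝ)
    (ε : ι → ℤˣ) (i : ι) :
    boxVertex a (Pi.mulSingle i (-1) * ε)
      = Function.update (boxVertex a ε) i (-boxVertex a ε i) := by
  ext j
  rcases eq_or_ne j i with rfl | hj
  · simp [boxVertex]
  · simp [boxVertex, hj]

/-- The law of `T` i.i.d. observations in the Gaussian sequence model, with coordinates indexed by
an arbitrary finite type; `obsLaw d` is the case `ι = Fin d`. -/
def gaussianSequenceLaw {ι : Type*} [Fintype ι] (T : ℕ) (lam : ι → ℝ) (σ : ℝ) (w : ι → ℝ) :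
    Measure (Fin T → ι → ℝ) :=
  Measure.pi fun _ ↦ Measure.pi fun i ↦
    gaussianReal (lam i * w i) (lam i * σ ^ 2).toNNReal

/-- The log-likelihood ratio of the Gaussian sequence model at `w + v` against the one at `w`. -/
def gaussianLogLikelihoodRatio {ι : Type*} [Fintype ι] {T : ℕ} (lam : ι → ℝ) (σ : ℝ)
    (w v : ι → ℝ) (x : Fin T → ι → ℝ) : ℝ :=
  ∑ t, ∑ i, (v i * (x t i - lam i * w i) / σ ^ 2 - lam i * v i ^ 2 / (2 * σ ^ 2))

section GaussianSequenceModel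

variable {ι : Type*} [Fintype ι] {T : ℕ} {lam : ι → ℝ} {σ : ℝ}

instance (w : ι → ℝ) : IsProbabilityMeasure (gaussianSequenceLaw T lam σ w) := by
  unfold gaussianSequenceLaw
  infer_instance

theorem measurable_gaussianLogLikelihoodRatio (w v : ι → ℝ) :
    Measurable (gaussianLogLikelihoodRatio (T := T) lam σ w v) := by
  unfold gaussianLogLikelihoodRatio
  fun_prop

theorem gaussianSequenceLaw_add_eq_withDensity (hlam : ∀ i, 0 < lam i) (hσ : 0 < σ)
    (w v : ι → ℝ) :
    gaussianSequenceLaw T lam σ (w + v) = (gaussianSequenceLaw T lam σ w).withDensity fun x ↦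
      ENNReal.ofReal (Real.exp (gaussianLogLikelihoodRatio lam σ w v x)) := by
  have coordinate (i : ι) : gaussianReal (lam i * (w + v) i) (lam i * σ ^ 2).toNNReal
      = (gaussianReal (lam i * w i) (lam i * σ ^ 2).toNNReal).withDensity fun y ↦
        ENNReal.ofReal (Real.exp
          (v i * (y - lam i * w i) / σ ^ 2 - lam i * v i ^ 2 / (2 * σ ^ 2))) := by
    have hlam_i := hlam i
    have variance_pos : 0 < lam i * σ ^ 2 := by positivity
    rw [Pi.add_apply, mul_add,
      gaussianReal_add_eq_withDensity _ _ (Real.toNNReal_pos.2 variance_pos).ne']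
    simp only [Real.coe_toNNReal _ variance_pos.le]
    congr with y
    congr 2
    field_simp
  unfold gaussianSequenceLaw gaussianLogLikelihoodRatio
  simp_rw [coordinate]
  rw [pi_withDensity_ofReal_exp fun i ↦ by fun_prop, pi_withDensity_ofReal_exp fun _ ↦ by fun_prop]

theorem gaussianLogLikelihoodRatio_add_neg (w v : ι → ℝ) (x : Fin T → ι → ℝ) :
    gaussianLogLikelihoodRatio lam σ w v x + gaussianLogLikelihoodRatio lam σ w (-v) x
      = -(T * ∑ i, lam i * v i ^ 2) / σ ^ 2 := by
  have cancel (t : Fin T) (i : ι) :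
      v i * (x t i - lam i * w i) / σ ^ 2 - lam i * v i ^ 2 / (2 * σ ^ 2)
        + ((-v) i * (x t i - lam i * w i) / σ ^ 2 - lam i * (-v) i ^ 2 / (2 * σ ^ 2))
      = -(lam i * v i ^ 2) / σ ^ 2 := by
    simp only [Pi.neg_apply]
    ring
  simp_rw [gaussianLogLikelihoodRatio, ← Finset.sum_add_distrib, cancel]
  rw [← Finset.sum_div, Finset.sum_neg_distrib, Finset.sum_const, Finset.card_univ,
    Fintype.card_fin, nsmul_eq_mul]
  ring

theorem one_fourth_le_likelihoodRatio_mul_likelihoodRatio_neg (hσ : 0 < σ) (w : ι → ℝ) {v : ι → ℝ}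
    (hv : T * ∑ i, lam i * v i ^ 2 ≤ σ ^ 2) (x : Fin T → ι → ℝ) :
    1 / 4 ≤ Real.exp (gaussianLogLikelihoodRatio lam σ w v x)
      * Real.exp (gaussianLogLikelihoodRatio lam σ w (-v) x) := by
  rw [← Real.exp_add, gaussianLogLikelihoodRatio_add_neg]
  calc (1 / 4 : ℝ) ≤ Real.exp (-1) := by
        linarith [Real.exp_neg_one_gt_d9]
    _ ≤ _ := by
        rw [Real.exp_le_exp, neg_div, neg_le_neg_iff]
        exact (div_le_one (by positivity)).2 hv

/-- The mean squared error in coordinate `i` of the estimator `what`, whose randomization has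
law `ν`, when the parameter is `w`. -/
def coordRisk {Ω' : Type*} [MeasurableSpace Ω'] (lam : ι → ℝ) (σ : ℝ) (ν : Measure Ω')
    (what : (Fin T → ι → ℝ) × Ω' → ι → ℝ) (i : ι) (w : ι → ℝ) : ENNReal :=
  ∫⁻ p, ENNReal.ofReal ((what p i - w i) ^ 2) ∂((gaussianSequenceLaw T lam σ w).prod ν)

variable {Ω' : Type*} [MeasurableSpace Ω'] {ν : Measure Ω'}
  {what : (Fin T → ι → ℝ) × Ω' → ι → ℝ}

theorem lintegral_excessRisk_eq_sum_coordRisk (hlam : ∀ i, 0 ≤ lam i) (hwhat : Measurable what)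
    (w : ι → ℝ) :
    ∫⁻ p, ENNReal.ofReal ((1 / 2) * ∑ i, lam i * (what p i - w i) ^ 2)
        ∂((gaussianSequenceLaw T lam σ w).prod ν)
      = ∑ i, ENNReal.ofReal (lam i / 2) * coordRisk lam σ ν what i w := by
  have integrand (p : (Fin T → ι → ℝ) × Ω') :
      ENNReal.ofReal ((1 / 2) * ∑ i, lam i * (what p i - w i) ^ 2)
        = ∑ i, ENNReal.ofReal (lam i / 2) * ENNReal.ofReal ((what p i - w i) ^ 2) := by
    have weighted_nonneg (i : ι) : 0 ≤ lam i / 2 * (what p i - w i) ^ 2 := by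
      have := hlam i
      positivity
    simp_rw [← ENNReal.ofReal_mul (div_nonneg (hlam _) zero_le_two)]
    rw [← ENNReal.ofReal_sum_of_nonneg fun i _ ↦ weighted_nonneg i, Finset.mul_sum]
    congr! 2 with i
    ring
  simp_rw [integrand, coordRisk]
  rw [lintegral_finsetSum _ fun i _ ↦ by fun_prop]
  exact Finset.sum_congr rfl fun i _ ↦ lintegral_const_mul _ (by fun_prop)

variable [IsProbabilityMeasure ν]

theorem ofReal_sq_div_two_le_coordRisk_add_coordRisk (hlam : ∀ i, 0 < lam i) (hσ : 0 < σ)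
    (hwhat : Measurable what) (i : ι) (w : ι → ℝ) {v : ι → ℝ}
    (hv : T * ∑ j, lam j * v j ^ 2 ≤ σ ^ 2) :
    ENNReal.ofReal (v i ^ 2 / 2)
      ≤ coordRisk lam σ ν what i (w + v) + coordRisk lam σ ν what i (w - v) := by
  have joint_law (u : ι → ℝ) : (gaussianSequenceLaw T lam σ (w + u)).prod ν
      = ((gaussianSequenceLaw T lam σ w).prod ν).withDensity fun p ↦
        ENNReal.ofReal (Real.exp (gaussianLogLikelihoodRatio lam σ w u p.1)) := by
    rw [gaussianSequenceLaw_add_eq_withDensity hlam hσ,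
      prod_withDensity_left (measurable_gaussianLogLikelihoodRatio w u).exp.ennreal_ofReal]
  have measurable_density (u : ι → ℝ) : Measurable fun p : (Fin T → ι → ℝ) × Ω' ↦
      Real.exp (gaussianLogLikelihoodRatio lam σ w u p.1) :=
    ((measurable_gaussianLogLikelihoodRatio w u).comp measurable_fst).exp
  have two_point := two_point_lower_bound (measurable_density v) (measurable_density (-v))
    (joint_law v) (joint_law (-v)) (by norm_num) (fun _ ↦ (Real.exp_pos _).le)
    (fun p ↦ one_fourth_le_likelihoodRatio_mul_likelihoodRatio_neg hσ w hv p.1)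
    (Y := fun p ↦ what p i - w i) (by fun_prop) (v i)
  convert two_point using 2
  · ring
  · simp only [coordRisk, Pi.add_apply, sub_add_eq_sub_sub]
  · simp only [coordRisk, sub_eq_add_neg w, Pi.add_apply, Pi.neg_apply, sub_add_eq_sub_sub,
      sub_neg_eq_add]

theorem ofReal_sq_div_two_le_coordRisk_add_coordRisk_update [DecidableEq ι]
    (hlam : ∀ i, 0 < lam i) (hσ : 0 < σ) (hwhat : Measurable what) (i : ι) (w : ι → ℝ)
    (hw : T * (lam i * w i ^ 2) ≤ σ ^ 2) :
    ENNReal.ofReal (w i ^ 2 / 2) ≤ coordRisk lam σ ν what i w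
      + coordRisk lam σ ν what i (Function.update w i (-w i)) := by
  have center_add : Function.update w i 0 + Pi.single i (w i) = w := by
    ext j
    rcases eq_or_ne j i with rfl | hj <;> simp [*]
  have center_sub :
      Function.update w i 0 - Pi.single i (w i) = Function.update w i (-w i) := by
    ext j
    rcases eq_or_ne j i with rfl | hj <;> simp [*]
  have single_small : T * ∑ j, lam j * (Pi.single i (w i) : ι → ℝ) j ^ 2 ≤ σ ^ 2 := by
    simpa [Pi.single_apply, ite_pow] using hw
  have two_point := ofReal_sq_div_two_le_coordRisk_add_coordRisk (ν := ν) hlam hσ hwhat i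
    (Function.update w i 0) single_small
  rwa [center_add, center_sub, Pi.single_eq_same] at two_point

theorem one_eighth_mul_sum_le_iSup_boxVertex (hlam : ∀ i, 0 < lam i) (hσ : 0 < σ)
    (hwhat : Measurable what) {a : ι → ℝ} (ha : ∀ i, T * (lam i * a i ^ 2) ≤ σ ^ 2) :
    ENNReal.ofReal (1 / 8 * ∑ i, lam i * a i ^ 2) ≤
      ⨆ ε, ∫⁻ p, ENNReal.ofReal ((1 / 2) * ∑ i, lam i * (what p i - boxVertex a ε i) ^ 2)
        ∂((gaussianSequenceLaw T lam σ (boxVertex a ε)).prod ν) := by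
  classical
  have flip_bound (i : ι) (ε : ι → ℤˣ) :
      ENNReal.ofReal (lam i * a i ^ 2 / 4)
        ≤ ENNReal.ofReal (lam i / 2) * coordRisk lam σ ν what i (boxVertex a ε)
          + ENNReal.ofReal (lam i / 2) *
            coordRisk lam σ ν what i (boxVertex a (Pi.mulSingle i (-1) * ε)) := by
    have sq_eq : boxVertex a ε i ^ 2 = a i ^ 2 :=
      (sq_eq_sq_iff_abs_eq_abs _ _).2 (abs_boxVertex a ε i)
    have two_point := ofReal_sq_div_two_le_coordRisk_add_coordRisk_update (ν := ν) hlam hσ hwhat i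
      (boxVertex a ε) (sq_eq ▸ ha i)
    rw [sq_eq, ← boxVertex_mulSingle_neg_one_mul] at two_point
    rw [← mul_add, (by ring : lam i * a i ^ 2 / 4 = lam i / 2 * (a i ^ 2 / 2)),
      ENNReal.ofReal_mul (half_pos (hlam i)).le]
    gcongr
  have assouad := sum_le_two_mul_iSup_sum (fun i ↦ Equiv.mulLeft (Pi.mulSingle i (-1 : ℤˣ)))
    _ _ flip_bound
  simp_rw [lintegral_excessRisk_eq_sum_coordRisk (fun i ↦ (hlam i).le) hwhat]
  refine (ENNReal.mul_le_mul_iff_right two_ne_zero ENNReal.ofNat_ne_top).1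
    (le_of_eq_of_le ?_ assouad)
  rw [← ENNReal.ofReal_sum_of_nonneg fun i _ ↦ by have := hlam i; positivity,
    ← ENNReal.ofReal_ofNat, ← ENNReal.ofReal_mul zero_le_two, ← mul_assoc, ← Finset.sum_div]
  congr 1
  ring

end GaussianSequenceModel

theorem minmax_lower_bound_general {ι : Type*} [Fintype ι] {T : ℕ} (hT : 0 < T)
    {lam : ι → ℝ} (hlam : ∀ i, 0 < lam i) {σ : ℝ} (hσ : 0 < σ)
    {wbar : ι → ℝ} (hwbar : ∀ i, 0 ≤ wbar i)
    {Ω' : Type*} [MeasurableSpace Ω'] {ν : Measure Ω'} [IsProbabilityMeasure ν]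
    {what : (Fin T → ι → ℝ) × Ω' → ι → ℝ} (hwhat : Measurable what) :
    ENNReal.ofReal (1 / 8 * ∑ i, min (σ ^ 2 / T) (lam i * wbar i ^ 2)) ≤
      ⨆ w ∈ {w : ι → ℝ | ∀ i, |w i| ≤ wbar i},
        ∫⁻ p, ENNReal.ofReal ((1 / 2) * ∑ i, lam i * (what p i - w i) ^ 2)
          ∂((gaussianSequenceLaw T lam σ w).prod ν) := by
  have T_pos : (0 : ℝ) < T := Nat.cast_pos.2 hT
  let a (i : ι) : ℝ := √(min (σ ^ 2 / T) (lam i * wbar i ^ 2) / lam i)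
  have lam_mul_sq (i : ι) : lam i * a i ^ 2 = min (σ ^ 2 / T) (lam i * wbar i ^ 2) := by
    have := hlam i
    rw [Real.sq_sqrt (by positivity), mul_div_cancel₀ _ (hlam i).ne']
  have a_le (i : ι) : |a i| ≤ wbar i := by
    rw [abs_of_nonneg (Real.sqrt_nonneg _)]
    refine Real.sqrt_le_iff.2 ⟨hwbar i, ?_⟩
    rw [div_le_iff₀' (hlam i)]
    exact min_le_right _ _
  have a_small (i : ι) : T * (lam i * a i ^ 2) ≤ σ ^ 2 := by
    rw [lam_mul_sq, ← le_div_iff₀' T_pos]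
    exact min_le_left _ _
  simp_rw [← lam_mul_sq]
  refine (one_eighth_mul_sum_le_iSup_boxVertex (ν := ν) hlam hσ hwhat a_small).trans
    (iSup_le fun ε ↦ ?_)
  exact le_iSup₂_of_le (boxVertex a ε) (fun i ↦ (abs_boxVertex a ε i).trans_le (a_le i)) le_rfl

/-- Information-theoretic lower bound (Theorem 4.3 of the paper): for any estimator
(built from the `T` observations and an independent source of randomness), the supremum
of the expected excess risk over `{w* : |w*^{(i)}| ≤ w̄^{(i)} ∀i}` is at least
`(1/8)(|I|σ²/T + Σ_{i∉I} λ_i (w̄^{(i)})²)`, where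
`I = {i : λ_i (w̄^{(i)})² ≥ σ²/T}`. -/
theorem minmax_lower_bound
    (d T : ℕ) (hd : 0 < d) (hT : 0 < T)
    (lam : Fin d → ℝ) (hlam : ∀ i, 0 < lam i)
    (hmono : ∀ i j : Fin d, i ≤ j → lam j ≤ lam i)
    (σ : ℝ) (hσ : 0 < σ)
    (wbar : Fin d → ℝ) (hwbar : ∀ i, 0 < wbar i)
    -- the estimator: a measurable map of the observations and independent randomness
    (Ω' : Type) (_ : MeasurableSpace Ω') (ν : Measure Ω') (_ : IsProbabilityMeasure ν)
    (what : (Fin T → Fin d → ℝ) × Ω' → Fin d → ℝ) (hmeas : Measurable what) :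
    ENNReal.ofReal ((1 / 8) *
        (((Finset.univ.filter fun i : Fin d =>
            σ ^ 2 / T ≤ lam i * (wbar i) ^ 2).card : ℝ) * σ ^ 2 / T
          + ∑ i ∈ Finset.univ.filter
              (fun i : Fin d => ¬ (σ ^ 2 / T ≤ lam i * (wbar i) ^ 2)),
            lam i * (wbar i) ^ 2)) ≤
      ⨆ wstar ∈ {w : Fin d → ℝ | ∀ i, |w i| ≤ wbar i},
        ∫⁻ p, ENNReal.ofReal
            ((1 / 2) * ∑ i : Fin d, lam i * (what p i - wstar i) ^ 2)
          ∂((obsLaw d T lam σ wstar).prod ν) := by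
  rw [mul_div_assoc, ← sum_min_eq_card_mul_add_sum]
  exact minmax_lower_bound_general hT hlam hσ (fun i ↦ (hwbar i).le) hmeas
end
end

section
/- Let T ≥ 16 be such that n = log₂ T and K = T/n are positive integers, set A = 256 (log₂ T)(ln T), let η₀ ≤ 1/λ₁, β ∈ [0, (1 − A/T)²], and let (η_t) be the exponentially decaying step-size schedule. Define the 2d×2d matrices Â_t = [[(1+β)I_d − η_t H, −β I_d],[I_d, 0]] and H̃ = [[H, 0],[0, 0]]. Let (N_t)_{t=0}^{T−1} be any positive semidefinite 2d×2d matrices with N_t ⪯ σ² H̃, and define C₀ = 0, C_t = Â_{t−1} C_{t−1} Â_{t−1}ᵀ + η_{t−1}² N_{t−1} for 1 ≤ t ≤ T. Then there is a universal constant C₂ > 0 such that tr(H̃ C_T) ≤ C₂ σ² ( (λ₁² η₀² + A²) k* / T + η₀² Σ_{j=k*+1}^{d} λ_j² T /(1 − √β)² ), where k* = max{k ∈ {1,…,d} : λ_k η₀ ≥ (1 − √β)/T} (k* = 0 if this set is empty). -/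
open Matrix Finset

noncomputable section

/-- `k* = max{k ∈ {1,…,d} : λ_k η₀ ≥ c}` (with `k* = 0` if the set is empty),
where the eigenvalue `λ_k` is `lam ⟨k-1,_⟩`. -/
def kstarOf (d : ℕ) (lam : Fin d → ℝ) (η₀ c : ℝ) : ℕ :=
  (Finset.univ.filter fun i : Fin d => c ≤ lam i * η₀).sup fun i => (i : ℕ) + 1

/-!
In an eigenbasis of `H` the trace splits into one `2 × 2` heavy-ball recursion per eigenvalue. Each
of them is controlled by a quadratic Lyapunov function `V_x` of the second moments which, along a
step of normalized size `x = λ η ≤ 1`, never increases and shrinks by the factor `1 - δ` as soon as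
`x` is at least of order `(1 - β) δ`. Since `V` depends on `x`, it is weighted by `exp x`, which
makes it decrease also when the step size is lowered; the noise of a step adds at most `3 σ² x²`.

Summing the noise over all steps gives the bound for the tail eigenvalues. For the head eigenvalues,
either all steps are below the critical size `κ = (1 - β) A / (2 T)`, or some stage has
step size comparable to `κ`; that stage alone contracts everything accumulated before it by
`T ^ (-4)`, and from then on the noise is of order `σ² κ²` per step. This needs `A < T`, which holds
from `T = 2 ^ 16` on; the finitely many smaller `T` are covered by a crude exponential bound.
-/

/-- Companion matrix of the scalar heavy-ball recursion `w₊ = (1 + β - x) w - β w₋`, acting on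
`(w, w₋)`; here `x` stands for the step size times an eigenvalue of the Hessian. -/
def companion (β x : ℝ) : Matrix (Fin 2) (Fin 2) ℝ := !![1 + β - x, -β; 1, 0]

/-- Lyapunov functional for the second moment `M` of `(w, w₋)`: the expectation of
`w² - (1 + β - x) w w₋ + (1 + β²) / 2 * w₋²`. With `β` in place of `(1 + β²) / 2` the form would
be multiplied by exactly `β` at each step; the excess `(1 - β)² / 2` makes it definite uniformly
in `x`. -/
def lyapunov (β x : ℝ) (M : Matrix (Fin 2) (Fin 2) ℝ) : ℝ :=
  M 0 0 - (1 + β - x) * M 0 1 + (1 + β ^ 2) / 2 * M 1 1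

/-- The Lyapunov functional weighted by `exp x`, so that it also decreases when the step size `x`
is lowered. -/
def potential (β x : ℝ) (M : Matrix (Fin 2) (Fin 2) ℝ) : ℝ :=
  Real.exp x * lyapunov β x M

section Lyapunov

variable {M : Matrix (Fin 2) (Fin 2) ℝ} {β x : ℝ}

lemma apply_one_zero_of_posSemidef (hM : M.PosSemidef) : M 1 0 = M 0 1 := by
  simpa using hM.isHermitian.apply 0 1

lemma quadratic_form_nonneg (hM : M.PosSemidef) (y z : ℝ) :
    0 ≤ y ^ 2 * M 0 0 + 2 * y * z * M 0 1 + z ^ 2 * M 1 1 := by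
  have h := hM.dotProduct_mulVec_nonneg ![y, z]
  simp only [star_trivial, mulVec, dotProduct, Fin.sum_univ_two, Matrix.cons_val_zero,
    Matrix.cons_val_one, apply_one_zero_of_posSemidef hM] at h
  linarith

-- The same form in the coordinates `(w - w₋, w₋)`.
lemma increment_form_nonneg (hM : M.PosSemidef) (k : ℝ) :
    0 ≤ (M 0 0 - 2 * M 0 1 + M 1 1) + 2 * k * (M 0 1 - M 1 1) + k ^ 2 * M 1 1 := by
  linarith [quadratic_form_nonneg hM 1 (k - 1)]

lemma increment_nonneg (hM : M.PosSemidef) : 0 ≤ M 0 0 - 2 * M 0 1 + M 1 1 := by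
  simpa using increment_form_nonneg hM 0

lemma increment_le_lyapunov (hM : M.PosSemidef) (hx₀ : 0 ≤ x) (hx₁ : x ≤ 1) :
    M 0 0 - 2 * M 0 1 + M 1 1 ≤ 4 * lyapunov β x M := by
  unfold lyapunov
  linarith [mul_nonneg hx₀ (increment_form_nonneg hM 2), increment_form_nonneg hM (1 - β),
    mul_nonneg (sub_nonneg.2 hx₁) (increment_nonneg hM)]

lemma sq_mul_apply_one_one_le_lyapunov (hM : M.PosSemidef) (hx₀ : 0 ≤ x) (hx₁ : x ≤ 1) :
    (1 - β) ^ 2 * M 1 1 ≤ 6 * lyapunov β x M := by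
  unfold lyapunov
  linarith [mul_nonneg hx₀ (increment_form_nonneg hM 2),
    increment_form_nonneg hM (2 / 3 * (1 - β)),
    mul_nonneg (sub_nonneg.2 hx₁) (increment_nonneg hM)]

lemma lyapunov_nonneg (hM : M.PosSemidef) (hx₀ : 0 ≤ x) (hx₁ : x ≤ 1) :
    0 ≤ lyapunov β x M := by
  linarith [increment_nonneg hM, increment_le_lyapunov (β := β) hM hx₀ hx₁]

lemma sq_mul_apply_zero_zero_le_lyapunov (hM : M.PosSemidef) (hβ₀ : 0 ≤ β) (hβ₁ : β ≤ 1)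
    (hx₀ : 0 ≤ x) (hx₁ : x ≤ 1) : (1 - β) ^ 2 * M 0 0 ≤ 20 * lyapunov β x M := by
  have hsq : (1 - β) ^ 2 ≤ 1 := pow_le_one₀ (by linarith) (by linarith)
  calc (1 - β) ^ 2 * M 0 0
      ≤ (1 - β) ^ 2 * (2 * (M 0 0 - 2 * M 0 1 + M 1 1) + 2 * M 1 1) := by
        gcongr; linarith [quadratic_form_nonneg hM 1 (-2)]
    _ ≤ (1 - β) ^ 2 * (2 * (4 * lyapunov β x M)) + 2 * ((1 - β) ^ 2 * M 1 1) := by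
        rw [mul_add, mul_left_comm _ 2 (M 1 1)]
        gcongr
        exact increment_le_lyapunov hM hx₀ hx₁
    _ ≤ 1 * (2 * (4 * lyapunov β x M)) + 2 * (6 * lyapunov β x M) := by
        linarith [mul_le_mul_of_nonneg_right hsq (lyapunov_nonneg (β := β) hM hx₀ hx₁),
          sq_mul_apply_one_one_le_lyapunov (β := β) hM hx₀ hx₁]
    _ = 20 * lyapunov β x M := by ring

lemma lyapunov_le (hM : M.PosSemidef) (hx₀ : 0 ≤ x) (hx₁ : x ≤ 1) :
    lyapunov β x M ≤
      2 * (M 0 0 - 2 * M 0 1 + M 1 1) + ((1 - β) ^ 2 + 3 / 2 * x) * M 1 1 := by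
  unfold lyapunov
  linarith [mul_nonneg hx₀ (increment_form_nonneg hM (-1)), increment_form_nonneg hM (-(1 - β)),
    mul_nonneg (sub_nonneg.2 hx₁) (increment_nonneg hM)]

lemma lyapunov_sub_lyapunov_companion (hM : M.PosSemidef) (β x : ℝ) :
    lyapunov β x M - lyapunov β x (companion β x * M * (companion β x)ᵀ) =
      (1 - β) * ((1 + β) / 2 * (M 0 0 - 2 * M 0 1 + M 1 1) + x * M 0 1) := by
  simp only [lyapunov, companion, mul_apply, Fin.sum_univ_two, transpose_apply, of_apply,
    cons_val', cons_val_zero, cons_val_one, cons_val_fin_one, apply_one_zero_of_posSemidef hM]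
  ring

lemma dissipation_ge (hM : M.PosSemidef) (hβ₀ : 0 ≤ β) (hx₀ : 0 ≤ x) (hx₁ : x ≤ 1) :
    (M 0 0 - 2 * M 0 1 + M 1 1) / 6 + x * M 1 1 / 4 ≤
      (1 + β) / 2 * (M 0 0 - 2 * M 0 1 + M 1 1) + x * M 0 1 := by
  linarith [mul_nonneg hx₀ (increment_form_nonneg hM (3 / 2)),
    mul_nonneg (sub_nonneg.2 hx₁) (increment_nonneg hM), mul_nonneg hβ₀ (increment_nonneg hM)]

lemma lyapunov_companion_le {δ : ℝ} (hM : M.PosSemidef) (hβ₀ : 0 ≤ β) (hβ₁ : β ≤ 1) (hx₀ : 0 ≤ x)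
    (hx₁ : x ≤ 1) (hδ₀ : 0 ≤ δ) (hδβ : δ ≤ (1 - β) / 12) (hδx : 8 * (1 - β) * δ ≤ x) :
    lyapunov β x (companion β x * M * (companion β x)ᵀ) ≤ (1 - δ) * lyapunov β x M := by
  have hW := increment_nonneg hM
  have hc : 0 ≤ M 1 1 := hM.diag_nonneg
  have hβ : 0 ≤ 1 - β := sub_nonneg.2 hβ₁
  have hmain : δ * lyapunov β x M ≤
      (1 - β) * ((M 0 0 - 2 * M 0 1 + M 1 1) / 6 + x * M 1 1 / 4) := by
    linarith [mul_le_mul_of_nonneg_left (lyapunov_le (β := β) hM hx₀ hx₁) hδ₀,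
      mul_le_mul_of_nonneg_right hδβ hW, mul_le_mul_of_nonneg_right hδx (mul_nonneg hβ hc),
      mul_le_mul_of_nonneg_right hδβ (mul_nonneg hx₀ hc)]
  linarith [lyapunov_sub_lyapunov_companion hM β x,
    mul_le_mul_of_nonneg_left (dissipation_ge hM hβ₀ hx₀ hx₁) hβ]

lemma potential_mono {y : ℝ} (hM : M.PosSemidef) (hx₀ : 0 ≤ x) (hx₁ : x ≤ 1) (hy : y ≤ x) :
    potential β y M ≤ potential β x M := by
  have hb : -M 0 1 ≤ lyapunov β x M := by
    linarith [increment_le_lyapunov (β := β) hM hx₀ hx₁, quadratic_form_nonneg hM 1 1]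
  calc potential β y M
      = Real.exp y * (lyapunov β x M + (x - y) * -M 0 1) := by
        unfold potential lyapunov; ring
    _ ≤ Real.exp y * (lyapunov β x M + (x - y) * lyapunov β x M) := by
        gcongr
    _ = Real.exp y * ((x - y + 1) * lyapunov β x M) := by ring
    _ ≤ Real.exp y * (Real.exp (x - y) * lyapunov β x M) := by
        have hV := lyapunov_nonneg (β := β) hM hx₀ hx₁
        gcongr
        exact Real.add_one_le_exp _
    _ = potential β x M := by
        rw [potential, ← mul_assoc, ← Real.exp_add, add_sub_cancel]

lemma lyapunov_le_potential (hM : M.PosSemidef) (hx₀ : 0 ≤ x) (hx₁ : x ≤ 1) :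
    lyapunov β x M ≤ potential β x M :=
  le_mul_of_one_le_left (lyapunov_nonneg hM hx₀ hx₁) (Real.one_le_exp hx₀)

end Lyapunov

/-- Second moments `D t`, `t ≤ T`, of the heavy-ball iterates along one eigendirection, in units of
the excess loss: they start at `0`, and step `t` with normalized step size `x t` applies the
companion matrix and adds noise of variance at most `(σ * x t) ^ 2` to the new iterate. The step
sizes are nonincreasing and lie in `[0, 1]`; the recursion is an inequality, so that the noise may
be any matrix below the stated one. -/
structure ModeMoments (T : ℕ) (β σ : ℝ) (x : ℕ → ℝ) (D : ℕ → Matrix (Fin 2) (Fin 2) ℝ) :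
    Prop where
  step_antitone : Antitone x
  step_nonneg : ∀ t, 0 ≤ x t
  step_zero_le_one : x 0 ≤ 1
  zero : D 0 = 0
  posSemidef : ∀ t ≤ T, (D t).PosSemidef
  moment_succ_le : ∀ t < T, (companion β (x t) * D t * (companion β (x t))ᵀ +
    (σ * x t) ^ 2 • Matrix.single 0 0 1 - D (t + 1)).PosSemidef

namespace ModeMoments

variable {T : ℕ} {β σ : ℝ} {x : ℕ → ℝ} {D : ℕ → Matrix (Fin 2) (Fin 2) ℝ}

lemma step_le_one (h : ModeMoments T β σ x D) (t : ℕ) : x t ≤ 1 :=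
  (h.step_antitone t.zero_le).trans h.step_zero_le_one

lemma sq_noise_le (h : ModeMoments T β σ x D) {s t : ℕ} (hst : s ≤ t) :
    (σ * x t) ^ 2 ≤ (σ * x s) ^ 2 := by
  rw [mul_pow, mul_pow]
  gcongr
  · exact h.step_nonneg t
  · exact h.step_antitone hst

lemma potential_zero (h : ModeMoments T β σ x D) : potential β (x 0) (D 0) = 0 := by
  simp [potential, lyapunov, h.zero]

lemma lyapunov_succ_le (h : ModeMoments T β σ x D) {t : ℕ} (ht : t < T) :
    lyapunov β (x t) (D (t + 1)) ≤
      lyapunov β (x t) (companion β (x t) * D t * (companion β (x t))ᵀ) + (σ * x t) ^ 2 := by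
  have hgap := lyapunov_nonneg (β := β) (h.moment_succ_le t ht) (h.step_nonneg t) (h.step_le_one t)
  simp only [lyapunov, Matrix.sub_apply, Matrix.add_apply, Matrix.smul_apply, smul_eq_mul,
    single_apply, Fin.isValue, Fin.reduceEq, and_true, and_false, if_true, if_false] at hgap ⊢
  linarith

lemma potential_succ_le (h : ModeMoments T β σ x D) (hβ₀ : 0 ≤ β) (hβ₁ : β ≤ 1) {t : ℕ}
    (ht : t < T) {δ : ℝ} (hδ₀ : 0 ≤ δ) (hδβ : δ ≤ (1 - β) / 12) (hδx : 8 * (1 - β) * δ ≤ x t) :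
    potential β (x (t + 1)) (D (t + 1)) ≤
      (1 - δ) * potential β (x t) (D t) + 3 * (σ * x t) ^ 2 := by
  have hexp : Real.exp (x t) ≤ 3 :=
    (Real.exp_le_exp.2 (h.step_le_one t)).trans (Real.exp_one_lt_d9.le.trans (by norm_num))
  calc potential β (x (t + 1)) (D (t + 1))
      ≤ potential β (x t) (D (t + 1)) :=
        potential_mono (h.posSemidef _ ht) (h.step_nonneg t) (h.step_le_one t)
          (h.step_antitone t.le_succ)
    _ ≤ Real.exp (x t) * ((1 - δ) * lyapunov β (x t) (D t) + (σ * x t) ^ 2) := by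
        unfold potential
        gcongr
        refine (h.lyapunov_succ_le ht).trans ?_
        gcongr
        exact lyapunov_companion_le (h.posSemidef t ht.le) hβ₀ hβ₁ (h.step_nonneg t)
          (h.step_le_one t) hδ₀ hδβ hδx
    _ = (1 - δ) * potential β (x t) (D t) + Real.exp (x t) * (σ * x t) ^ 2 := by
        unfold potential; ring
    _ ≤ (1 - δ) * potential β (x t) (D t) + 3 * (σ * x t) ^ 2 := by gcongr

lemma potential_add_le (h : ModeMoments T β σ x D) (hβ₀ : 0 ≤ β) (hβ₁ : β ≤ 1) {s k : ℕ}
    (hsk : s + k ≤ T) {δ : ℝ} (hδ₀ : 0 ≤ δ) (hδβ : δ ≤ (1 - β) / 12)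
    (hδx : ∀ j < k, 8 * (1 - β) * δ ≤ x (s + j)) :
    potential β (x (s + k)) (D (s + k)) ≤
      (1 - δ) ^ k * potential β (x s) (D s) + k * (3 * (σ * x s) ^ 2) := by
  -- Subtracting `j` times the largest noise term turns the affine recursion into a linear one.
  have hgeom := le_geom
    (u := fun j => potential β (x (s + j)) (D (s + j)) - j * (3 * (σ * x s) ^ 2))
    (by linarith : 0 ≤ 1 - δ) k fun j hj => ?_
  · simpa [sub_le_iff_le_add] using hgeom
  have hstep := h.potential_succ_le hβ₀ hβ₁ (t := s + j) (by lia) hδ₀ hδβ (hδx j hj)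
  have hslack : 0 ≤ δ * (j * (3 * (σ * x s) ^ 2)) := by positivity
  push_cast
  rw [← add_assoc]
  linarith [h.sq_noise_le (Nat.le_add_right s j)]

lemma potential_add_le_of_le (h : ModeMoments T β σ x D) (hβ₀ : 0 ≤ β) (hβ₁ : β ≤ 1) {s k : ℕ}
    (hsk : s + k ≤ T) :
    potential β (x (s + k)) (D (s + k)) ≤
      potential β (x s) (D s) + k * (3 * (σ * x s) ^ 2) := by
  simpa using h.potential_add_le hβ₀ hβ₁ hsk le_rfl (by linarith)
    (by simpa using fun j _ => h.step_nonneg (s + j))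

lemma sq_mul_apply_le_potential (h : ModeMoments T β σ x D) (hβ₀ : 0 ≤ β) (hβ₁ : β ≤ 1) :
    (1 - β) ^ 2 * D T 0 0 ≤ 20 * potential β (x T) (D T) := by
  have hM := h.posSemidef T le_rfl
  calc (1 - β) ^ 2 * D T 0 0 ≤ 20 * lyapunov β (x T) (D T) :=
        sq_mul_apply_zero_zero_le_lyapunov hM hβ₀ hβ₁ (h.step_nonneg T) (h.step_le_one T)
    _ ≤ 20 * potential β (x T) (D T) := by
        gcongr
        exact lyapunov_le_potential hM (h.step_nonneg T) (h.step_le_one T)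

theorem sq_mul_apply_le_horizon (h : ModeMoments T β σ x D) (hβ₀ : 0 ≤ β) (hβ₁ : β ≤ 1) :
    (1 - β) ^ 2 * D T 0 0 ≤ 60 * σ ^ 2 * (x 0 ^ 2 * T) := by
  have hgrow := h.potential_add_le_of_le hβ₀ hβ₁ (s := 0) (k := T) (by lia)
  rw [h.potential_zero, zero_add, zero_add] at hgrow
  linarith [h.sq_mul_apply_le_potential hβ₀ hβ₁]

lemma apply_le_tail (h : ModeMoments T β σ x D) (hβ₀ : 0 ≤ β) (hβ₁ : √β < 1) :
    D T 0 0 ≤ 60 * σ ^ 2 * (x 0 ^ 2 * T / (1 - √β) ^ 2) := by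
  have hβ : β ≤ √β := by
    simpa [hβ₀] using pow_le_of_le_one (Real.sqrt_nonneg β) hβ₁.le two_ne_zero
  have h0 : 0 ≤ D T 0 0 := (h.posSemidef T le_rfl).diag_nonneg
  rw [← mul_div_assoc, le_div_iff₀ (pow_pos (sub_pos.2 hβ₁) 2), mul_comm]
  calc (1 - √β) ^ 2 * D T 0 0 ≤ (1 - β) ^ 2 * D T 0 0 := by gcongr
    _ ≤ 60 * σ ^ 2 * (x 0 ^ 2 * T) := h.sq_mul_apply_le_horizon hβ₀ (hβ.trans hβ₁.le)

lemma trace_succ_le (h : ModeMoments T β σ x D) (hβ₀ : 0 ≤ β) {t : ℕ} (ht : t < T) :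
    (D (t + 1)).trace ≤ ((1 + β) ^ 2 + β ^ 2 + 1) * (D t).trace + (σ * x t) ^ 2 := by
  have hM := h.posSemidef t ht.le
  have hgap := (h.moment_succ_le t ht).trace_nonneg
  have hx : (1 + β - x t) ^ 2 ≤ (1 + β) ^ 2 := by
    gcongr <;> linarith [h.step_nonneg t, h.step_le_one t]
  have h0 : 0 ≤ D t 0 0 := hM.diag_nonneg
  have h1 : 0 ≤ D t 1 1 := hM.diag_nonneg
  simp only [companion, trace_fin_two, Matrix.sub_apply, Matrix.add_apply, Matrix.smul_apply,
    smul_eq_mul, mul_apply, Fin.sum_univ_two, transpose_apply, of_apply, cons_val',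
    cons_val_zero, cons_val_one, cons_val_fin_one, apply_one_zero_of_posSemidef hM, single_apply,
    Fin.isValue, Fin.reduceEq, and_true, and_false, if_true, if_false] at hgap ⊢
  linarith [mul_le_mul_of_nonneg_right hx (add_nonneg h0 h1),
    quadratic_form_nonneg hM β (1 + β - x t)]

theorem apply_le_pow (h : ModeMoments T β σ x D) (hβ₀ : 0 ≤ β) :
    D T 0 0 ≤ ((1 + β) ^ 2 + β ^ 2 + 1) ^ T * (σ * x 0) ^ 2 := by
  have hgeom := le_geom (u := fun t => (D t).trace + (σ * x 0) ^ 2)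
    (by positivity : 0 ≤ (1 + β) ^ 2 + β ^ 2 + 1) T fun t ht => ?_
  · have h1 : 0 ≤ D T 1 1 := (h.posSemidef T le_rfl).diag_nonneg
    simp only [h.zero, trace_zero, zero_add, trace_fin_two] at hgeom
    linarith [sq_nonneg (σ * x 0)]
  have hfactor : 0 ≤ (2 * β + 2 * β ^ 2) * (σ * x 0) ^ 2 := by positivity
  linarith [h.trace_succ_le hβ₀ ht, h.sq_noise_le t.zero_le]

lemma potential_le_of_stage (h : ModeMoments T β σ x D) (hβ₀ : 0 ≤ β) (hβ₁ : β ≤ 1) {s k : ℕ}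
    (hsk : s + k ≤ T) {δ : ℝ} (hδ₀ : 0 ≤ δ) (hδβ : δ ≤ (1 - β) / 12)
    (hδx : ∀ j < k, 8 * (1 - β) * δ ≤ x (s + j)) :
    potential β (x T) (D T) ≤ 3 * σ ^ 2 * ((1 - δ) ^ k * s + T * x s ^ 2) := by
  obtain ⟨m, rfl⟩ := Nat.exists_eq_add_of_le hsk
  have hpow : 0 ≤ (1 - δ) ^ k := pow_nonneg (by linarith) k
  have hbefore := h.potential_add_le_of_le hβ₀ hβ₁ (s := 0) (k := s) (by lia)
  have hstage := h.potential_add_le hβ₀ hβ₁ (by lia) hδ₀ hδβ hδx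
  have hafter := h.potential_add_le_of_le hβ₀ hβ₁ (s := s + k) (k := m) le_rfl
  rw [h.potential_zero, zero_add, zero_add] at hbefore
  calc potential β (x (s + k + m)) (D (s + k + m))
      ≤ (1 - δ) ^ k * (s * (3 * (σ * x 0) ^ 2)) + k * (3 * (σ * x s) ^ 2)
        + m * (3 * (σ * x (s + k)) ^ 2) := by
        linarith [mul_le_mul_of_nonneg_left hbefore hpow]
    _ ≤ (1 - δ) ^ k * (s * (3 * (σ * 1) ^ 2)) + k * (3 * (σ * x s) ^ 2)
        + m * (3 * (σ * x s) ^ 2) := by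
        have hx₀ := h.step_nonneg 0
        have hx₁ := h.step_zero_le_one
        have hx : (σ * x (s + k)) ^ 2 ≤ (σ * x s) ^ 2 := h.sq_noise_le (Nat.le_add_right s k)
        have hσ : (σ * x 0) ^ 2 ≤ (σ * 1) ^ 2 := by
          rw [mul_pow, mul_pow]; gcongr
        gcongr
    _ ≤ 3 * σ ^ 2 * ((1 - δ) ^ k * s + ((s + k + m : ℕ) : ℝ) * x s ^ 2) := by
        have hs : 0 ≤ s * (3 * (σ * x s) ^ 2) := by positivity
        push_cast
        linarith

end ModeMoments

/-- The exponentially decaying schedule: the step size starts at `x₀` and is divided by `4` after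
every stage of `K` steps. -/
def stageSchedule (x₀ : ℝ) (K t : ℕ) : ℝ := x₀ / 4 ^ (t / K)

section Schedule

variable {x₀ κ A : ℝ} {T n K : ℕ}

lemma stageSchedule_zero (x₀ : ℝ) (K : ℕ) : stageSchedule x₀ K 0 = x₀ := by
  simp [stageSchedule]

lemma stageSchedule_nonneg (hx : 0 ≤ x₀) (K t : ℕ) : 0 ≤ stageSchedule x₀ K t := by
  unfold stageSchedule; positivity

lemma stageSchedule_antitone (hx : 0 ≤ x₀) (K : ℕ) : Antitone (stageSchedule x₀ K) := by
  intro s t hst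
  unfold stageSchedule
  gcongr
  norm_num

lemma stageSchedule_stage_add (x₀ : ℝ) (L : ℕ) {j : ℕ} (hj : j < K) :
    stageSchedule x₀ K (L * K + j) = x₀ / 4 ^ L := by
  rw [stageSchedule, mul_comm, Nat.mul_add_div (by lia), Nat.div_eq_of_lt hj, add_zero]

lemma exists_critical_stage (hx₁ : x₀ ≤ 1) (hκ : 0 < κ) (hκx : κ ≤ x₀) (hκn : 1 < κ * 4 ^ n) :
    ∃ L < n, κ ≤ x₀ / 4 ^ L ∧ x₀ / 4 ^ L ≤ 4 * κ := by
  obtain ⟨L, hle, hlt⟩ := exists_nat_pow_near ((one_le_div hκ).2 hκx) (by norm_num : (1 : ℝ) < 4)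
  rw [le_div_iff₀ hκ] at hle
  rw [div_lt_iff₀ hκ, pow_succ] at hlt
  refine ⟨L, ?_, ?_, ?_⟩
  · refine (pow_lt_pow_iff_right₀ (by norm_num : (1 : ℝ) < 4)).1 (lt_of_mul_lt_mul_right ?_ hκ.le)
    linarith
  · rw [le_div_iff₀ (by positivity)]; linarith
  · rw [div_le_iff₀ (by positivity)]; linarith

lemma one_sub_pow_stage_le (hT : 0 < T) (hTK : T = n * K) (hA : 64 * n * Real.log T ≤ A)
    (hAT : A ≤ T) : (1 - A / (16 * T)) ^ K ≤ 1 / (T : ℝ) ^ 4 := by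
  have hT' : (0 : ℝ) < T := by exact_mod_cast hT
  have hTK' : (T : ℝ) = n * K := by exact_mod_cast hTK
  have hn : (0 : ℝ) < n := by exact_mod_cast Nat.pos_of_ne_zero (by rintro rfl; lia)
  have hK : (0 : ℝ) < K := by exact_mod_cast Nat.pos_of_ne_zero (by rintro rfl; lia)
  have hδ : 0 ≤ 1 - A / (16 * T) := by
    rw [sub_nonneg, div_le_one (by positivity)]; linarith
  calc (1 - A / (16 * T)) ^ K ≤ Real.exp (-(A / (16 * T))) ^ K := by
        gcongr; exact Real.one_sub_le_exp_neg _
    _ = Real.exp (-(A / (16 * n))) := by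
        rw [← Real.exp_nat_mul, hTK']
        congr 1
        field_simp
    _ ≤ Real.exp (-(4 * Real.log T)) := by
        gcongr
        rw [le_div_iff₀ (by positivity)]
        linarith
    _ = 1 / (T : ℝ) ^ 4 := by
        rw [Real.exp_neg, mul_comm, Real.exp_mul, Real.exp_log hT', one_div]
        norm_cast

lemma two_fifty_six_mul_log_lt (hn : 16 ≤ n) : 256 * n * Real.log (2 ^ n : ℕ) < (2 ^ n : ℕ) := by
  have hpow : 256 * n ^ 2 ≤ 2 ^ n := by
    induction n, hn using Nat.le_induction with
    | base => norm_num
    | succ k hk ih => rw [pow_succ 2 k]; nlinarith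
  calc 256 * n * Real.log (2 ^ n : ℕ) = 256 * (n ^ 2 * Real.log 2) := by
        push_cast [Real.log_pow]; ring
    _ < 256 * (n ^ 2 * 1) := by
        gcongr; exact Real.log_two_lt_d9.trans (by norm_num)
    _ ≤ (2 ^ n : ℕ) := by rw [mul_one]; exact_mod_cast hpow

lemma two_le_two_fifty_six_mul_log (hn : 0 < n) : 2 ≤ 256 * n * Real.log (2 ^ n : ℕ) := by
  have hn' : (1 : ℝ) ≤ n := by exact_mod_cast hn
  calc (2 : ℝ) ≤ 256 * 1 * (1 * (1 / 2)) := by norm_num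
    _ ≤ 256 * n * (n * Real.log 2) := by
        gcongr; exact le_trans (by norm_num) Real.log_two_gt_d9.le
    _ = 256 * n * Real.log (2 ^ n : ℕ) := by push_cast [Real.log_pow]; rfl

end Schedule

namespace ModeMoments

variable {T n K : ℕ} {β σ x₀ κ A : ℝ} {D : ℕ → Matrix (Fin 2) (Fin 2) ℝ}

lemma potential_stageSchedule_le {δ : ℝ} (h : ModeMoments T β σ (stageSchedule x₀ K) D)
    (hT : 0 < T) (hTK : T = n * K) (hβ₀ : 0 ≤ β) (hβ₁ : β ≤ 1) (hκ : 0 < κ)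
    (hκn : 1 < κ * 4 ^ n) (hδ₀ : 0 ≤ δ) (hδβ : δ ≤ (1 - β) / 12) (hδκ : 8 * (1 - β) * δ ≤ κ) :
    potential β (stageSchedule x₀ K T) (D T) ≤
      3 * σ ^ 2 * T * ((1 - δ) ^ K + (4 * κ) ^ 2) := by
  have hδ₁ : 0 ≤ (1 - δ) ^ K := pow_nonneg (by linarith) K
  have hx₀ := h.step_nonneg 0
  have hx₁ := h.step_zero_le_one
  rw [stageSchedule_zero] at hx₀ hx₁
  rcases le_total x₀ κ with hxκ | hκx
  · have hgrow := h.potential_add_le_of_le hβ₀ hβ₁ (s := 0) (k := T) (by lia)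
    rw [h.potential_zero, zero_add, zero_add, stageSchedule_zero, mul_pow] at hgrow
    calc potential β (stageSchedule x₀ K T) (D T) ≤ T * (3 * (σ ^ 2 * x₀ ^ 2)) := hgrow
      _ ≤ T * (3 * (σ ^ 2 * ((1 - δ) ^ K + (4 * κ) ^ 2))) := by
          gcongr
          calc x₀ ^ 2 ≤ (4 * κ) ^ 2 := by gcongr; linarith
            _ ≤ (1 - δ) ^ K + (4 * κ) ^ 2 := le_add_of_nonneg_left hδ₁
      _ = 3 * σ ^ 2 * T * ((1 - δ) ^ K + (4 * κ) ^ 2) := by ring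
  · obtain ⟨L, hLn, hκL, hLκ⟩ := exists_critical_stage hx₁ hκ hκx hκn
    have hK : 0 < K := Nat.pos_of_ne_zero (by rintro rfl; lia)
    have hLT : L * K + K ≤ T := by
      rw [hTK, ← Nat.succ_mul]; exact Nat.mul_le_mul_right K hLn
    have hxL : stageSchedule x₀ K (L * K) = x₀ / 4 ^ L := stageSchedule_stage_add x₀ L hK
    calc potential β (stageSchedule x₀ K T) (D T)
        ≤ 3 * σ ^ 2 * ((1 - δ) ^ K * (L * K : ℕ) + T * stageSchedule x₀ K (L * K) ^ 2) :=
          h.potential_le_of_stage hβ₀ hβ₁ hLT hδ₀ hδβ fun j hj =>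
            (stageSchedule_stage_add x₀ L hj).symm ▸ hδκ.trans hκL
      _ ≤ 3 * σ ^ 2 * ((1 - δ) ^ K * T + T * (4 * κ) ^ 2) := by
          have hLT' : L * K ≤ T := by lia
          rw [hxL]
          gcongr
      _ = 3 * σ ^ 2 * T * ((1 - δ) ^ K + (4 * κ) ^ 2) := by ring

-- With `κ = (1 - β) A / (2 T)` and `δ = A / (16 T)`, the stage at which the step size is comparable
-- to `κ` contracts the potential by `(1 - δ) ^ K ≤ T ^ (-4)`.
theorem apply_le_sq_div (h : ModeMoments T β σ (stageSchedule x₀ K) D)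
    (hT : 0 < T) (hTn : T ≤ 2 ^ n) (hTK : T = n * K) (hβ₀ : 0 ≤ β) (hA₂ : 2 ≤ A)
    (hA : 64 * n * Real.log T ≤ A) (hAβ : A / T ≤ 1 - β) :
    D T 0 0 ≤ 300 * σ ^ 2 * (A ^ 2 / T) := by
  have hT₀ : (0 : ℝ) < T := by exact_mod_cast hT
  have hγ : 0 < 1 - β := lt_of_lt_of_le (by positivity) hAβ
  have hγT : A ≤ (1 - β) * T := (div_le_iff₀ hT₀).1 hAβ
  have hκn : 1 < (1 - β) * A / (2 * T) * 4 ^ n := by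
    have hT4 : (T : ℝ) ^ 2 ≤ 4 ^ n := by
      have : (T : ℝ) ≤ 2 ^ n := by exact_mod_cast hTn
      calc (T : ℝ) ^ 2 ≤ (2 ^ n) ^ 2 := by gcongr
        _ = 4 ^ n := by rw [← pow_mul, mul_comm, pow_mul]; norm_num
    calc 1 < (2 : ℝ) * 2 / 2 := by norm_num
      _ ≤ A * A / 2 := by gcongr
      _ ≤ (1 - β) * T * A / 2 := by gcongr
      _ = (1 - β) * A / (2 * T) * T ^ 2 := by field_simp
      _ ≤ (1 - β) * A / (2 * T) * 4 ^ n := by gcongr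
  have hpot := h.potential_stageSchedule_le (δ := A / (16 * T)) hT hTK hβ₀ (by linarith)
    (by positivity) hκn (by positivity)
    (by rw [mul_comm, ← div_div, div_le_iff₀ (by norm_num)]; linarith)
    (le_of_eq (by field_simp; norm_num))
  have hdecay : (1 - A / (16 * T)) ^ K ≤ ((1 - β) * A / T) ^ 2 := by
    calc (1 - A / (16 * T)) ^ K ≤ 1 / (T : ℝ) ^ 4 :=
          one_sub_pow_stage_le hT hTK hA (hγT.trans (mul_le_of_le_one_left hT₀.le (by linarith)))
      _ ≤ (A ^ 2) ^ 2 / (T : ℝ) ^ 4 := by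
          gcongr; exact one_le_pow₀ (one_le_pow₀ (by linarith))
      _ = (A / T * A / T) ^ 2 := by ring
      _ ≤ ((1 - β) * A / T) ^ 2 := by gcongr
  refine le_of_mul_le_mul_left ?_ (pow_pos hγ 2)
  calc (1 - β) ^ 2 * D T 0 0
      ≤ 20 * potential β (stageSchedule x₀ K T) (D T) :=
        h.sq_mul_apply_le_potential hβ₀ (by linarith)
    _ ≤ 20 * (3 * σ ^ 2 * T * (((1 - β) * A / T) ^ 2 + (4 * ((1 - β) * A / (2 * T))) ^ 2)) := by
        gcongr
        refine hpot.trans ?_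
        gcongr
    _ = (1 - β) ^ 2 * (300 * σ ^ 2 * (A ^ 2 / T)) := by field_simp; ring

lemma apply_le_head (h : ModeMoments (2 ^ n) β σ (stageSchedule x₀ K) D) (hn : 16 ≤ n)
    (hK : 2 ^ n = n * K) (hβ₀ : 0 ≤ β)
    (hβ : β ≤ (1 - 256 * n * Real.log (2 ^ n : ℕ) / (2 ^ n : ℕ)) ^ 2) :
    D (2 ^ n) 0 0 ≤ 300 * σ ^ 2 * ((256 * n * Real.log (2 ^ n : ℕ)) ^ 2 / (2 ^ n : ℕ)) := by
  set A : ℝ := 256 * n * Real.log (2 ^ n : ℕ)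
  have hA₂ : 2 ≤ A := two_le_two_fifty_six_mul_log (by lia)
  have hA₁ : A / (2 ^ n : ℕ) < 1 :=
    (div_lt_one (by positivity)).2 (two_fifty_six_mul_log_lt hn)
  have hA₀ : 0 ≤ A / (2 ^ n : ℕ) := by positivity
  have hlog : 64 * n * Real.log (2 ^ n : ℕ) ≤ A := by
    have hlog₀ := Real.log_natCast_nonneg (2 ^ n)
    exact mul_le_mul_of_nonneg_right (by gcongr; norm_num) hlog₀
  have hAβ : A / (2 ^ n : ℕ) ≤ 1 - β := by
    linarith [pow_le_of_le_one (sub_nonneg.2 hA₁.le) (sub_le_self 1 hA₀) two_ne_zero]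
  exact h.apply_le_sq_div (by positivity) le_rfl hK hβ₀ hA₂ hlog hAβ

end ModeMoments

lemma exists_short_horizon_bound (N : ℕ) : ∃ R : ℝ, 0 < R ∧
    ∀ {T n : ℕ} {β σ : ℝ} {x : ℕ → ℝ} {D : ℕ → Matrix (Fin 2) (Fin 2) ℝ},
      T = 2 ^ n → n ≤ N → 0 ≤ β → β ≤ (1 - 256 * n * Real.log T / T) ^ 2 →
      ModeMoments T β σ x D → D T 0 0 ≤ R * (σ ^ 2 * x 0 ^ 2) := by
  let B : ℝ := (1 + 256 * N) ^ 2
  refine ⟨((1 + B) ^ 2 + B ^ 2 + 1) ^ 2 ^ N, by positivity, ?_⟩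
  intro T n β σ x D hT hnN hβ₀ hβA h
  have hT₁ : (1 : ℝ) ≤ T := by rw [hT]; exact_mod_cast Nat.one_le_two_pow
  have hA₀ : 0 ≤ 256 * n * Real.log T / T := by
    have := Real.log_natCast_nonneg T
    positivity
  have hAN : 256 * n * Real.log T / T ≤ 256 * N := by
    rw [div_le_iff₀ (by linarith)]
    gcongr
    exact Real.log_le_self (by linarith)
  have hβB : β ≤ B := hβA.trans (sq_le_sq' (by linarith) (by linarith))
  have hbase : 1 ≤ (1 + B) ^ 2 + B ^ 2 + 1 := le_add_of_nonneg_left (by positivity)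
  calc D T 0 0 ≤ ((1 + β) ^ 2 + β ^ 2 + 1) ^ T * (σ * x 0) ^ 2 := h.apply_le_pow hβ₀
    _ ≤ ((1 + B) ^ 2 + B ^ 2 + 1) ^ T * (σ * x 0) ^ 2 := by gcongr
    _ ≤ ((1 + B) ^ 2 + B ^ 2 + 1) ^ 2 ^ N * (σ * x 0) ^ 2 := by
        rw [hT]
        gcongr
        norm_num
    _ = ((1 + B) ^ 2 + B ^ 2 + 1) ^ 2 ^ N * (σ ^ 2 * x 0 ^ 2) := by rw [mul_pow]

theorem exists_mode_bound : ∃ C : ℝ, 0 < C ∧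
    ∀ {T n K : ℕ} {β σ x₀ : ℝ} {D : ℕ → Matrix (Fin 2) (Fin 2) ℝ},
      T = 2 ^ n → T = n * K → 0 ≤ β → β ≤ (1 - 256 * n * Real.log T / T) ^ 2 →
      ModeMoments T β σ (stageSchedule x₀ K) D →
      D T 0 0 ≤ C * σ ^ 2 * ((256 * n * Real.log T) ^ 2 / T) ∧
        (√β < 1 → D T 0 0 ≤ C * σ ^ 2 * (x₀ ^ 2 * T / (1 - √β) ^ 2)) := by
  obtain ⟨R, hR, hshort⟩ := exists_short_horizon_bound 16
  refine ⟨2 ^ 16 * R + 300, by positivity, ?_⟩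
  rintro T n K β σ x₀ D rfl hTK hβ₀ hβ h
  refine ⟨?_, fun hβ₁ => ?_⟩
  · rcases le_total 16 n with hn | hn
    · refine (h.apply_le_head hn hTK hβ₀ hβ).trans ?_
      gcongr
      linarith
    have hn₀ : 0 < n := Nat.pos_of_ne_zero (by rintro rfl; simp at hTK)
    have hx₀ := h.step_nonneg 0
    have hx₁ := h.step_zero_le_one
    calc D (2 ^ n) 0 0 ≤ R * (σ ^ 2 * stageSchedule x₀ K 0 ^ 2) := hshort rfl hn hβ₀ hβ h
      _ ≤ R * (σ ^ 2 * (2 ^ 16 * (1 ^ 2 / 2 ^ 16))) := by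
          gcongr
          linarith [pow_le_one₀ hx₀ hx₁ (n := 2)]
      _ ≤ R * (σ ^ 2 * (2 ^ 16 * ((256 * n * Real.log (2 ^ n : ℕ)) ^ 2 / (2 ^ n : ℕ)))) := by
          have hA := two_le_two_fifty_six_mul_log hn₀
          push_cast at hA ⊢
          gcongr
          · linarith
          · norm_num
      _ = 2 ^ 16 * R * σ ^ 2 * ((256 * n * Real.log (2 ^ n : ℕ)) ^ 2 / (2 ^ n : ℕ)) := by ring
      _ ≤ _ := by gcongr; linarith
  · rw [← stageSchedule_zero x₀ K]
    refine (h.apply_le_tail hβ₀ hβ₁).trans ?_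
    gcongr
    linarith

section Matrices

variable {ι : Type*}

lemma mul_mul_transpose_apply {m n : Type*} [Fintype n] (A B : Matrix m n ℝ) (C : Matrix n n ℝ)
    (i j : m) : (A * C * Bᵀ) i j = A i ⬝ᵥ C *ᵥ B j := by
  rw [Matrix.mul_assoc]; rfl

lemma posSemidef_mul_mul_transpose {m n : Type*} [Finite m] [Fintype n] {M : Matrix n n ℝ}
    (hM : M.PosSemidef) (B : Matrix m n ℝ) : (B * M * Bᵀ).PosSemidef := by
  simpa only [conjTranspose_eq_transpose_of_trivial] using hM.mul_mul_conjTranspose_same B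

/-- The `2 × (d + d)` matrix with rows `(v, 0)` and `(0, v)`: it extracts the component along `v` of
the current and of the previous iterate. -/
def modeProjection (v : ι → ℝ) : Matrix (Fin 2) (ι ⊕ ι) ℝ :=
  of ![Sum.elim v 0, Sum.elim 0 v]

lemma modeProjection_zero (v : ι → ℝ) : modeProjection v 0 = Sum.elim v 0 := rfl

lemma modeProjection_one (v : ι → ℝ) : modeProjection v 1 = (Sum.elim 0 v : ι ⊕ ι → ℝ) := rfl

variable [Fintype ι] {H : Matrix ι ι ℝ} {v : ι → ℝ} {l : ℝ}

lemma vecMul_eq_smul_of_isSymm (hH : H.IsSymm) (hv : H *ᵥ v = l • v) : v ᵥ* H = l • v := by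
  rw [← mulVec_transpose, hH.eq, hv]

lemma modeProjection_mul_fromBlocks (hv : H *ᵥ v = l • v) (hv₁ : v ⬝ᵥ v = 1) :
    modeProjection v * (fromBlocks H 0 0 0 : Matrix (ι ⊕ ι) (ι ⊕ ι) ℝ) * (modeProjection v)ᵀ =
      (l • Matrix.single 0 0 1 : Matrix (Fin 2) (Fin 2) ℝ) := by
  ext i j
  rw [mul_mul_transpose_apply]
  fin_cases i <;> fin_cases j <;>
    simp [modeProjection_zero, modeProjection_one, fromBlocks_mulVec, hv, hv₁]

lemma modeProjection_mul_apply_zero_zero (v : ι → ℝ) (C : Matrix (ι ⊕ ι) (ι ⊕ ι) ℝ) :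
    (modeProjection v * C * (modeProjection v)ᵀ) 0 0 = v ⬝ᵥ C.toBlocks₁₁ *ᵥ v := by
  rw [mul_mul_transpose_apply, modeProjection_zero]
  conv_lhs => rw [← fromBlocks_toBlocks C]
  simp [fromBlocks_mulVec]

variable [DecidableEq ι]

/-- The heavy-ball iteration matrix with momentum `β` and step size `η` for the quadratic with
Hessian `H`, acting on the stacked vector of the current and the previous iterate. -/
def heavyBallStep (β η : ℝ) (H : Matrix ι ι ℝ) : Matrix (ι ⊕ ι) (ι ⊕ ι) ℝ :=
  fromBlocks ((1 + β) • (1 : Matrix ι ι ℝ) - η • H) ((-β) • (1 : Matrix ι ι ℝ)) 1 0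

/-- `C t`, `t ≤ T`, are the second moments of the heavy-ball iterates started at `0` and driven by
noise whose second moments `N t` are dominated by `σ ^ 2` times the Hessian. -/
structure HeavyBallCovariance (T : ℕ) (β σ : ℝ) (η : ℕ → ℝ) (H : Matrix ι ι ℝ)
    (N C : ℕ → Matrix (ι ⊕ ι) (ι ⊕ ι) ℝ) : Prop where
  noise_posSemidef : ∀ t < T, (N t).PosSemidef
  noise_le : ∀ t < T,
    (σ ^ 2 • (fromBlocks H 0 0 0 : Matrix (ι ⊕ ι) (ι ⊕ ι) ℝ) - N t).PosSemidef
  zero : C 0 = 0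
  succ : ∀ t < T, C (t + 1) =
    heavyBallStep β (η t) H * C t * (heavyBallStep β (η t) H)ᵀ + η t ^ 2 • N t

lemma modeProjection_mul_heavyBallStep (hH : H.IsSymm) (hv : H *ᵥ v = l • v) (β η : ℝ) :
    modeProjection v * heavyBallStep β η H = companion β (l * η) * modeProjection v := by
  have hvH := vecMul_eq_smul_of_isSymm hH hv
  ext i j
  rw [mul_apply_eq_vecMul, mul_apply, Fin.sum_univ_two, heavyBallStep]
  fin_cases i <;> rcases j with j | j <;>
    simp [modeProjection_zero, modeProjection_one, companion, vecMul_fromBlocks, vecMul_sub,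
      vecMul_smul, vecMul_neg, hvH]
  ring

lemma modeProjection_conj_heavyBallStep (hH : H.IsSymm) (hv : H *ᵥ v = l • v) (β η : ℝ)
    (C : Matrix (ι ⊕ ι) (ι ⊕ ι) ℝ) :
    modeProjection v * (heavyBallStep β η H * C * (heavyBallStep β η H)ᵀ) * (modeProjection v)ᵀ =
      companion β (l * η) * (modeProjection v * C * (modeProjection v)ᵀ) *
        (companion β (l * η))ᵀ := by
  set P := modeProjection v
  set S := heavyBallStep β η H
  have hPS : P * S = companion β (l * η) * P := modeProjection_mul_heavyBallStep hH hv β η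
  calc P * (S * C * Sᵀ) * Pᵀ = P * S * C * (P * S)ᵀ := by
        simp only [transpose_mul, Matrix.mul_assoc]
    _ = companion β (l * η) * (P * C * Pᵀ) * (companion β (l * η))ᵀ := by
        rw [hPS]; simp only [transpose_mul, Matrix.mul_assoc]

namespace HeavyBallCovariance

variable {T K : ℕ} {β σ η₀ : ℝ} {η : ℕ → ℝ} {N C : ℕ → Matrix (ι ⊕ ι) (ι ⊕ ι) ℝ}

lemma posSemidef (h : HeavyBallCovariance T β σ η H N C) {t : ℕ} (ht : t ≤ T) :
    (C t).PosSemidef := by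
  induction t with
  | zero => rw [h.zero]; exact PosSemidef.zero
  | succ t ih =>
    rw [h.succ t ht]
    exact (posSemidef_mul_mul_transpose (ih (by lia)) _).add
      ((h.noise_posSemidef t ht).smul (sq_nonneg (η t)))

theorem modeMoments (h : HeavyBallCovariance T β σ η H N C) (hH : H.IsSymm)
    (hv : H *ᵥ v = l • v) (hv₁ : v ⬝ᵥ v = 1) (hl : 0 ≤ l) (hη₀ : 0 ≤ η₀) (hlη : l * η₀ ≤ 1)
    (hη : ∀ t < T, η t = stageSchedule η₀ K t) :
    ModeMoments T β σ (stageSchedule (l * η₀) K)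
      fun t => l • (modeProjection v * C t * (modeProjection v)ᵀ) where
  step_antitone := stageSchedule_antitone (mul_nonneg hl hη₀) K
  step_nonneg := stageSchedule_nonneg (mul_nonneg hl hη₀) K
  step_zero_le_one := by rwa [stageSchedule_zero]
  zero := by simp [h.zero]
  posSemidef t ht := (posSemidef_mul_mul_transpose (h.posSemidef ht) _).smul hl
  moment_succ_le t ht := by
    have hx : stageSchedule (l * η₀) K t = l * η t := by
      rw [hη t ht, stageSchedule, stageSchedule, mul_div_assoc]
    -- The gap is the projection of `σ ^ 2 H̃ - N t`, scaled by `l * η t ^ 2`.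
    convert (posSemidef_mul_mul_transpose (h.noise_le t ht) (modeProjection v)).smul
      (mul_nonneg hl (sq_nonneg (η t))) using 1
    rw [hx, h.succ t ht, Matrix.mul_add, Matrix.add_mul,
      modeProjection_conj_heavyBallStep hH hv, Matrix.mul_sub, Matrix.sub_mul]
    simp only [Matrix.mul_smul, Matrix.smul_mul, modeProjection_mul_fromBlocks hv hv₁]
    module

end HeavyBallCovariance

lemma trace_mul_eq_sum_eigenbasis {lam : ι → ℝ} {v : ι → ι → ℝ} (hH : H.IsSymm)
    (hv : ∀ i, H *ᵥ v i = lam i • v i)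
    (hortho : ∀ i j, v i ⬝ᵥ v j = if i = j then (1 : ℝ) else 0) (X : Matrix ι ι ℝ) :
    (H * X).trace = ∑ j, lam j * (v j ⬝ᵥ X *ᵥ v j) := by
  have hVV : (of v)ᵀ * of v = 1 := mul_eq_one_comm.1 <| by
    ext i j
    exact (hortho i j).trans (one_apply ..).symm
  have hVH : of v * H = diagonal lam * of v := by
    ext i j
    rw [diagonal_mul]
    exact congrFun (vecMul_eq_smul_of_isSymm hH (hv i)) j
  calc (H * X).trace = ((of v)ᵀ * of v * (H * X)).trace := by rw [hVV, Matrix.one_mul]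
    _ = (of v * H * X * (of v)ᵀ).trace := by
        rw [Matrix.mul_assoc, trace_mul_comm]; simp only [Matrix.mul_assoc]
    _ = (diagonal lam * (of v * X * (of v)ᵀ)).trace := by
        rw [hVH]; simp only [Matrix.mul_assoc]
    _ = ∑ j, lam j * (v j ⬝ᵥ X *ᵥ v j) := by
        refine sum_congr rfl fun j _ => ?_
        rw [diag_apply, diagonal_mul, mul_mul_transpose_apply]
        rfl

lemma trace_fromBlocks_mul_eq_sum {lam : ι → ℝ} {v : ι → ι → ℝ} (hH : H.IsSymm)
    (hv : ∀ i, H *ᵥ v i = lam i • v i)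
    (hortho : ∀ i j, v i ⬝ᵥ v j = if i = j then (1 : ℝ) else 0)
    (C : Matrix (ι ⊕ ι) (ι ⊕ ι) ℝ) :
    ((fromBlocks H 0 0 0 : Matrix (ι ⊕ ι) (ι ⊕ ι) ℝ) * C).trace =
      ∑ j, lam j * (modeProjection (v j) * C * (modeProjection (v j))ᵀ) 0 0 := by
  simp only [modeProjection_mul_apply_zero_zero]
  rw [← trace_mul_eq_sum_eigenbasis hH hv hortho]
  conv_lhs => rw [← fromBlocks_toBlocks C, fromBlocks_multiply]
  simp [trace]

end Matrices

theorem shb_variance_bound_general : ∃ C₂ : ℝ, 0 < C₂ ∧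
    ∀ (ι : Type*) [Fintype ι] [DecidableEq ι] (H : Matrix ι ι ℝ) (lam : ι → ℝ) (v : ι → ι → ℝ)
      (σ η₀ β : ℝ) (T n K : ℕ) (η : ℕ → ℝ) (N C : ℕ → Matrix (ι ⊕ ι) (ι ⊕ ι) ℝ) (s : Finset ι),
      H.IsSymm → (∀ i, H *ᵥ v i = lam i • v i) →
      (∀ i j, v i ⬝ᵥ v j = if i = j then (1 : ℝ) else 0) → (∀ i, 0 ≤ lam i) →
      T = 2 ^ n → T = n * K → 0 ≤ η₀ → (∀ i, lam i * η₀ ≤ 1) →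
      0 ≤ β → β ≤ (1 - 256 * n * Real.log T / T) ^ 2 → (s.Nonempty → √β < 1) →
      (∀ t < T, η t = stageSchedule η₀ K t) → HeavyBallCovariance T β σ η H N C →
      ((fromBlocks H 0 0 0 : Matrix (ι ⊕ ι) (ι ⊕ ι) ℝ) * C T).trace ≤
        C₂ * σ ^ 2 * ((256 * n * Real.log T) ^ 2 * (#sᶜ : ℝ) / T +
          η₀ ^ 2 * ∑ j ∈ s, lam j ^ 2 * T / (1 - √β) ^ 2) := by
  obtain ⟨C₂, hC₂, hmode⟩ := exists_mode_bound
  refine ⟨C₂, hC₂, ?_⟩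
  intro ι _ _ H lam v σ η₀ β T n K η N C s hH hv hortho hlam hT hTK hη₀ hlη hβ₀ hβ hs hη h
  have hbound (j : ι) := hmode hT hTK hβ₀ hβ (h.modeMoments hH (hv j) (by simp [hortho]) (hlam j)
    hη₀ (hlη j) hη)
  set m := fun j => lam j * (modeProjection (v j) * C T * (modeProjection (v j))ᵀ) 0 0
  calc ((fromBlocks H 0 0 0 : Matrix (ι ⊕ ι) (ι ⊕ ι) ℝ) * C T).trace
      = ∑ j ∈ sᶜ, m j + ∑ j ∈ s, m j := by
        rw [trace_fromBlocks_mul_eq_sum hH hv hortho, sum_compl_add_sum]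
    _ ≤ ∑ j ∈ sᶜ, C₂ * σ ^ 2 * ((256 * n * Real.log T) ^ 2 / T) +
        ∑ j ∈ s, C₂ * σ ^ 2 * ((lam j * η₀) ^ 2 * T / (1 - √β) ^ 2) := by
        gcongr with j _ j hj
        · exact (hbound j).1
        · exact (hbound j).2 (hs ⟨j, hj⟩)
    _ = C₂ * σ ^ 2 * ((256 * n * Real.log T) ^ 2 * (#sᶜ : ℝ) / T +
          η₀ ^ 2 * ∑ j ∈ s, lam j ^ 2 * T / (1 - √β) ^ 2) := by
        rw [sum_const, nsmul_eq_mul, mul_add, mul_sum, mul_sum]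
        congr 1
        · ring
        · exact sum_congr rfl fun j _ => by ring

section CriticalIndex

variable {d : ℕ} {lam : Fin d → ℝ} {η₀ c : ℝ}

lemma mul_lt_of_kstarOf_le {j : Fin d} (hj : kstarOf d lam η₀ c ≤ j) : lam j * η₀ < c := by
  by_contra! hc
  have hle : (j : ℕ) + 1 ≤ kstarOf d lam η₀ c :=
    Finset.le_sup (f := fun i : Fin d => (i : ℕ) + 1) (mem_filter.2 ⟨mem_univ j, hc⟩)
  lia

lemma sqrt_lt_one_of_kstarOf_le {β : ℝ} {T : ℕ} {j : Fin d} (hlam : 0 ≤ lam j * η₀)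
    (hj : kstarOf d lam η₀ ((1 - √β) / T) ≤ j) : √β < 1 := by
  have hpos : 0 < (1 - √β) / T := hlam.trans_lt (mul_lt_of_kstarOf_le hj)
  have hne : (T : ℝ) ≠ 0 := fun h => by simp [h] at hpos
  have hT : (0 : ℝ) < T := T.cast_nonneg.lt_of_ne' hne
  exact sub_pos.1 ((div_pos_iff_of_pos_right hT).1 hpos)

lemma card_compl_filter_le (k : ℕ) : #(univ.filter fun j : Fin d => k ≤ j)ᶜ ≤ k := by
  simp only [compl_filter, not_le, Fin.card_filter_val_lt, min_le_right]

end CriticalIndex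

/-- Variance bound (Lemma B.1 of the paper): for the recursion
`C_t = Â_{t−1} C_{t−1} Â_{t−1}ᵀ + η_{t−1}² N_{t−1}` with `0 ⪯ N_t ⪯ σ² H̃`,
`tr(H̃ C_T) ≤ C₂ σ² ((λ₁²η₀² + A²)k*/T + η₀² Σ_{j>k*} λ_j² T/(1−√β)²)`. -/
theorem shb_variance_bound :
    ∃ C₂ : ℝ, 0 < C₂ ∧
      ∀ (d : ℕ) (hd : 0 < d)
        (H : Matrix (Fin d) (Fin d) ℝ) (lam : Fin d → ℝ) (v : Fin d → (Fin d → ℝ))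
        (σ η₀ β : ℝ) (T n K : ℕ) (η : ℕ → ℝ)
        (N Cmat : ℕ → Matrix (Fin d ⊕ Fin d) (Fin d ⊕ Fin d) ℝ),
        -- H symmetric positive definite, orthonormal eigenbasis,
        -- nonincreasing positive eigenvalues
        H.IsSymm →
        (∀ i, H.mulVec (v i) = lam i • v i) →
        (∀ i j, v i ⬝ᵥ v j = if i = j then (1 : ℝ) else 0) →
        (∀ i j : Fin d, i ≤ j → lam j ≤ lam i) →
        (∀ i, 0 < lam i) →
        -- T ≥ 16, n = log₂ T and K = T/n positive integers
        16 ≤ T → T = 2 ^ n → T = n * K → 0 < n → 0 < K →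
        -- step size and momentum constraints, with A = 256 (log₂ T)(ln T)
        0 < η₀ → η₀ ≤ 1 / lam ⟨0, hd⟩ →
        0 ≤ β → β ≤ (1 - (256 * n * Real.log T) / T) ^ 2 →
        -- exponentially decaying step-size schedule
        (∀ t, t < T → η t = η₀ / 4 ^ (t / K)) →
        -- the noise second-moment matrices: 0 ⪯ N_t ⪯ σ² H̃
        (∀ t, t < T → (N t).PosSemidef) →
        (∀ t, t < T →
          (σ ^ 2 • (Matrix.fromBlocks H 0 0 0 : Matrix (Fin d ⊕ Fin d) (Fin d ⊕ Fin d) ℝ)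
            - N t).PosSemidef) →
        -- the variance recursion C₀ = 0, C_{t+1} = Â_t C_t Â_tᵀ + η_t² N_t
        Cmat 0 = 0 →
        (∀ t,
          Cmat (t + 1) =
            (Matrix.fromBlocks ((1 + β) • (1 : Matrix (Fin d) (Fin d) ℝ) - η t • H)
                ((-β) • (1 : Matrix (Fin d) (Fin d) ℝ)) 1 0)
              * Cmat t
              * (Matrix.fromBlocks ((1 + β) • (1 : Matrix (Fin d) (Fin d) ℝ) - η t • H)
                ((-β) • (1 : Matrix (Fin d) (Fin d) ℝ)) 1 0)ᵀ
            + η t ^ 2 • N t) →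
        -- the bound
        ((Matrix.fromBlocks H 0 0 0 : Matrix (Fin d ⊕ Fin d) (Fin d ⊕ Fin d) ℝ)
            * Cmat T).trace ≤
          C₂ * σ ^ 2 *
            (((lam ⟨0, hd⟩) ^ 2 * η₀ ^ 2 + (256 * n * Real.log T) ^ 2)
                * (kstarOf d lam η₀ ((1 - Real.sqrt β) / T) : ℝ) / T
              + η₀ ^ 2 * ∑ j ∈ Finset.univ.filter
                  (fun j : Fin d => kstarOf d lam η₀ ((1 - Real.sqrt β) / T) ≤ (j : ℕ)),
                  (lam j) ^ 2 * T / (1 - Real.sqrt β) ^ 2) := by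
  obtain ⟨C₂, hC₂, hbound⟩ := shb_variance_bound_general
  refine ⟨C₂, hC₂, ?_⟩
  intro d hd H lam v σ η₀ β T n K η N C hH hv hortho hanti hlam _ hT₂ hTK _ _ hη₀ hη₀₁ hβ₀ hβ
    hη hN₀ hN hC₀ hC
  have hlη (i : Fin d) : lam i * η₀ ≤ 1 :=
    (mul_le_mul_of_nonneg_right (hanti _ i (Nat.zero_le i)) hη₀.le).trans
      ((le_div_iff₀' (hlam _)).1 hη₀₁)
  refine (hbound (Fin d) H lam v σ η₀ β T n K η N C
    (univ.filter fun j => kstarOf d lam η₀ ((1 - √β) / T) ≤ j) hH hv hortho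
    (fun i => (hlam i).le) hT₂ hTK hη₀.le hlη hβ₀ hβ
    (fun ⟨j, hj⟩ => sqrt_lt_one_of_kstarOf_le (mul_pos (hlam j) hη₀).le (mem_filter.1 hj).2)
    hη ⟨hN₀, hN, hC₀, fun t _ => hC t⟩).trans ?_
  gcongr
  · exact le_add_of_nonneg_left (by positivity)
  · exact_mod_cast card_compl_filter_le _
end
end

section
/- Let 0 ≤ β < 1, λ > 0, and 0 < η with ηλ ≤ 1, and let A(η, λ, β) = [[1+β−ηλ, −β],[1, 0]] be the momentum matrix with spectral radius ρ(A). If (1+β−ηλ)² − 4β ≥ 0 (real eigenvalues), then ρ(A) ≤ 1 − ηλ/2 − ηλ/(4(1−√β)). If (1+β−ηλ)² − 4β < 0 (complex eigenvalues), then ρ(A) = √β. In both cases ρ(A) < 1. -/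
open Matrix

noncomputable section

/-- The 2×2 momentum matrix `A(η, λ, β) = [[1+β−ηλ, −β],[1, 0]]`. -/
def momentumMatrix (η lam β : ℝ) : Matrix (Fin 2) (Fin 2) ℝ :=
  !![1 + β - η * lam, -β; 1, 0]

/-- The spectral radius of a real matrix: the maximum modulus of its complex eigenvalues. -/
def specRad {n : ℕ} (M : Matrix (Fin n) (Fin n) ℝ) : ℝ :=
  (spectralRadius ℂ (M.map (algebraMap ℝ ℂ))).toReal

/-!
An eigenvalue `a` of `A(η, λ, β)` satisfies `(1 - a) (a - β) = ηλ a`. As long as `ηλ ≤ 1 + β`, a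
real eigenvalue lies in `[0, 1]`, where `a - β ≤ (1 - β) a`; cancelling `a` gives
`ηλ ≤ (1 - a) (1 - β)`, that is `a ≤ 1 - ηλ / (1 - β)`, which is sharper than the bound in terms of
`√β`. Complex eigenvalues come as a conjugate pair, so their squared modulus is the determinant `β`.
-/

theorem exists_norm_eq_specRad {n : ℕ} [NeZero n] (M : Matrix (Fin n) (Fin n) ℝ) :
    ∃ μ ∈ spectrum ℂ (M.map (algebraMap ℝ ℂ)), ‖μ‖ = specRad M := by
  -- The spectral radius does not depend on the Banach algebra norm chosen here.
  let : NormedRing (Matrix (Fin n) (Fin n) ℂ) := Matrix.linftyOpNormedRing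
  let : NormedAlgebra ℂ (Matrix (Fin n) (Fin n) ℂ) := Matrix.linftyOpNormedAlgebra
  obtain ⟨μ, hμ, hnorm⟩ := spectrum.exists_nnnorm_eq_spectralRadius (M.map (algebraMap ℝ ℂ))
  exact ⟨μ, hμ, congrArg ENNReal.toReal hnorm⟩

section FinTwo

variable {M : Matrix (Fin 2) (Fin 2) ℝ} {μ : ℂ}

theorem mem_spectrum_map_fin_two_iff :
    μ ∈ spectrum ℂ (M.map (algebraMap ℝ ℂ)) ↔ μ ^ 2 - M.trace * μ + M.det = 0 := by
  rw [Matrix.mem_spectrum_iff_isRoot_charpoly, Matrix.charpoly_map, Matrix.charpoly_fin_two]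
  simp

theorem sq_two_mul_sub_trace_eq_discr (hμ : μ ∈ spectrum ℂ (M.map (algebraMap ℝ ℂ))) :
    (2 * μ - M.trace) ^ 2 = M.discr := by
  rw [Matrix.discr_fin_two]
  push_cast
  linear_combination 4 * mem_spectrum_map_fin_two_iff.1 hμ

open scoped ComplexOrder in
theorem exists_root_abs_eq_specRad_of_discr_nonneg (h : 0 ≤ M.discr) :
    ∃ a : ℝ, a ^ 2 - M.trace * a + M.det = 0 ∧ |a| = specRad M := by
  obtain ⟨μ, hμ, hnorm⟩ := exists_norm_eq_specRad M
  have him : (2 * μ - M.trace).im = 0 := by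
    rw [← Complex.sq_nonneg_iff, sq_two_mul_sub_trace_eq_discr hμ]
    exact_mod_cast h
  obtain ⟨a, rfl⟩ : ∃ a : ℝ, (a : ℂ) = μ :=
    ⟨μ.re, Complex.ext rfl (by simpa [eq_comm] using him)⟩
  refine ⟨a, ?_, by rw [← hnorm, Complex.norm_real, Real.norm_eq_abs]⟩
  exact_mod_cast mem_spectrum_map_fin_two_iff.1 hμ

open scoped ComplexOrder ComplexConjugate in
theorem specRad_eq_sqrt_det_of_discr_neg (h : M.discr < 0) : specRad M = √M.det := by
  obtain ⟨μ, hμ, hnorm⟩ := exists_norm_eq_specRad M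
  have hre : (2 * μ - M.trace).re = 0 := by
    rw [← Complex.sq_nonpos_iff, sq_two_mul_sub_trace_eq_discr hμ]
    exact_mod_cast h.le
  have hconj : conj μ = M.trace - μ := by
    apply Complex.ext
    · simp only [Complex.sub_re, Complex.mul_re, Complex.re_ofNat, Complex.im_ofNat, zero_mul,
        sub_zero, Complex.ofReal_re] at hre
      simp only [Complex.conj_re, Complex.sub_re, Complex.ofReal_re]
      linarith
    · simp
  have hsq : (‖μ‖ ^ 2 : ℂ) = M.det := by
    rw [← Complex.mul_conj', hconj]
    linear_combination -mem_spectrum_map_fin_two_iff.1 hμ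
  rw [← hnorm, ← Real.sqrt_sq (norm_nonneg μ)]
  exact congrArg Real.sqrt (mod_cast hsq)

end FinTwo

section Momentum

variable {η lam β : ℝ}

theorem trace_momentumMatrix : (momentumMatrix η lam β).trace = 1 + β - η * lam := by
  simp [momentumMatrix, Matrix.trace_fin_two]

theorem det_momentumMatrix : (momentumMatrix η lam β).det = β := by
  simp [momentumMatrix, Matrix.det_fin_two]

theorem discr_momentumMatrix :
    (momentumMatrix η lam β).discr = (1 + β - η * lam) ^ 2 - 4 * β := by
  rw [Matrix.discr_fin_two, trace_momentumMatrix, det_momentumMatrix]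

theorem abs_le_of_momentum_root {x a : ℝ} (hβ₀ : 0 ≤ β) (hβ₁ : β < 1) (hx₀ : 0 ≤ x)
    (hx₁ : x ≤ 1 + β) (ha : a ^ 2 - (1 + β - x) * a + β = 0) : |a| ≤ 1 - x / (1 - β) := by
  have hfactor : (1 - a) * (a - β) = x * a := by linear_combination -ha
  have ha₀ : 0 ≤ a := by
    by_contra! hneg
    nlinarith [mul_nonneg (sub_nonneg.2 hx₁) (neg_nonneg.2 hneg.le), sq_pos_of_neg hneg]
  have ha₁ : a ≤ 1 := by
    by_contra! hgt
    nlinarith [mul_nonneg hx₀ ha₀]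
  have hx : x ≤ (1 - a) * (1 - β) := by
    rcases ha₀.eq_or_lt with rfl | hpos
    · linarith
    · refine le_of_mul_le_mul_right ?_ hpos
      calc x * a = (1 - a) * (a - β) := hfactor.symm
        _ ≤ (1 - a) * ((1 - β) * a) := by
          gcongr
          linarith [mul_le_of_le_one_right hβ₀ ha₁]
        _ = (1 - a) * (1 - β) * a := by ring
  rw [abs_of_nonneg ha₀, le_sub_comm, div_le_iff₀ (by linarith)]
  exact hx

theorem specRad_momentumMatrix_le (hβ₀ : 0 ≤ β) (hβ₁ : β < 1) (hx₀ : 0 ≤ η * lam)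
    (hx₁ : η * lam ≤ 1 + β) (hdiscr : 0 ≤ (1 + β - η * lam) ^ 2 - 4 * β) :
    specRad (momentumMatrix η lam β) ≤ 1 - η * lam / (1 - β) := by
  obtain ⟨a, ha, habs⟩ :=
    exists_root_abs_eq_specRad_of_discr_nonneg (discr_momentumMatrix.symm ▸ hdiscr)
  rw [trace_momentumMatrix, det_momentumMatrix] at ha
  exact habs ▸ abs_le_of_momentum_root hβ₀ hβ₁ hx₀ hx₁ ha

theorem specRad_momentumMatrix_eq_sqrt (hdiscr : (1 + β - η * lam) ^ 2 - 4 * β < 0) :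
    specRad (momentumMatrix η lam β) = √β := by
  rw [specRad_eq_sqrt_det_of_discr_neg (discr_momentumMatrix.symm ▸ hdiscr), det_momentumMatrix]

end Momentum

theorem one_sub_div_one_sub_le {β x : ℝ} (hβ₀ : 0 ≤ β) (hβ₁ : β < 1) (hx : 0 ≤ x) :
    1 - x / (1 - β) ≤ 1 - x / 2 - x / (4 * (1 - √β)) := by
  obtain ⟨s, hs₀, rfl⟩ : ∃ s : ℝ, 0 ≤ s ∧ s ^ 2 = β := ⟨√β, Real.sqrt_nonneg β, Real.sq_sqrt hβ₀⟩
  have hs₁ : 0 < 1 - s := by nlinarith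
  have hsq : 0 < 1 - s ^ 2 := by linarith
  rw [Real.sqrt_sq hs₀, ← sub_nonneg]
  have hgap : 1 - x / 2 - x / (4 * (1 - s)) - (1 - x / (1 - s ^ 2)) =
      x * ((1 - s) + 2 * s ^ 2) / (4 * (1 - s ^ 2)) := by
    rw [show 1 - s ^ 2 = (1 - s) * (1 + s) by ring]
    have : 1 + s ≠ 0 := by positivity
    field_simp
    ring
  rw [hgap]
  exact div_nonneg (by positivity) (mul_pos four_pos hsq).le

/-- The bound `1 − ηλ/(1−β)` is the tangent line at `ηλ = 0` to the larger eigenvalue. -/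
theorem momentum_matrix_spectral_radius_general
    (β lam η : ℝ) (hβ₀ : 0 ≤ β) (hβ₁ : β < 1) (hpos : 0 < η * lam) (hetalam : η * lam ≤ 1 + β) :
    (0 ≤ (1 + β - η * lam) ^ 2 - 4 * β →
      specRad (momentumMatrix η lam β) ≤ 1 - η * lam / (1 - β)) ∧
    ((1 + β - η * lam) ^ 2 - 4 * β < 0 →
      specRad (momentumMatrix η lam β) = √β) ∧
    specRad (momentumMatrix η lam β) < 1 := by
  have hreal := specRad_momentumMatrix_le hβ₀ hβ₁ hpos.le hetalam
  refine ⟨hreal, specRad_momentumMatrix_eq_sqrt, ?_⟩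
  rcases le_or_gt 0 ((1 + β - η * lam) ^ 2 - 4 * β) with hdiscr | hdiscr
  · exact (hreal hdiscr).trans_lt (sub_lt_self 1 (div_pos hpos (sub_pos.2 hβ₁)))
  · rw [specRad_momentumMatrix_eq_sqrt hdiscr, ← Real.sqrt_one]
    exact Real.sqrt_lt_sqrt hβ₀ hβ₁

/-- Spectral radius of the momentum matrix (Lemma B.4 of the paper): in the
real-eigenvalue case `ρ(A) ≤ 1 − ηλ/2 − ηλ/(4(1−√β))`, in the complex-eigenvalue
case `ρ(A) = √β`, and in both cases `ρ(A) < 1`. -/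
theorem momentum_matrix_spectral_radius
    (β lam η : ℝ) (hβ₀ : 0 ≤ β) (hβ₁ : β < 1) (hlam : 0 < lam) (hη : 0 < η)
    (hetalam : η * lam ≤ 1) :
    (0 ≤ (1 + β - η * lam) ^ 2 - 4 * β →
      specRad (momentumMatrix η lam β)
        ≤ 1 - η * lam / 2 - η * lam / (4 * (1 - Real.sqrt β))) ∧
    ((1 + β - η * lam) ^ 2 - 4 * β < 0 →
      specRad (momentumMatrix η lam β) = Real.sqrt β) ∧
    specRad (momentumMatrix η lam β) < 1 := by
  have h := momentum_matrix_spectral_radius_general β lam η hβ₀ hβ₁ (mul_pos hη hlam) (by linarith)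
  exact h.imp_left fun hreal hd ↦ (hreal hd).trans (one_sub_div_one_sub_le hβ₀ hβ₁ (by positivity))
end
end

section
/- Let 0 ≤ β < 1, λ > 0, and 0 < η with ηλ ≤ 1, and let A = A(η, λ, β) = [[1+β−ηλ, −β],[1, 0]] with spectral radius ρ(A) and discriminant Δ² = (1+β−ηλ)² − 4β. Then ‖A‖_F ≤ 3; for every integer k ≥ 2, ‖Aᵏ‖_F ≤ 3k·ρ(A)^{k−2}; and if moreover Δ² ≠ 0, then for every integer k ≥ 2, ‖Aᵏ‖_F ≤ (4/√|Δ²|)·ρ(A)^{k−1}. -/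
open Matrix

noncomputable section

/-- The Frobenius norm of a matrix. -/
def frobNorm {n : ℕ} (M : Matrix (Fin n) (Fin n) ℝ) : ℝ :=
  Real.sqrt (∑ i, ∑ j, (M i j) ^ 2)

/-!
Over `ℂ` the momentum matrix is the companion matrix of `(X - r)(X - s)`, where `r` and `s` are its
eigenvalues, so the entries of its powers are, up to the factor `-rs`, the divided differences
`h_n = (rⁿ - sⁿ) / (r - s) = ∑ rⁱ s^(n-1-i)`. When `|r|, |s| ≤ ρ`, the sum gives
`|h_n| ≤ n ρ^(n-1)` and the quotient gives `|h_n| ≤ 2 ρⁿ / |r - s|`, where `|r - s|² = |Δ²|`.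
If moreover `ρ ≤ 1`, then `|rs| ≤ 1` and all powers of `ρ` can be lowered to the smallest one
that occurs, which yields both bounds. In the given range of parameters `ρ ≤ 1` is the
Schur–Cohn criterion for the real quadratic `X² - (1 + β - ηλ)X + β`.
-/

section DividedDifference

open Finset

/-- The divided difference `(xⁿ - yⁿ) / (x - y)` of the `n`-th power, written as a geometric sum so
that it makes sense for `x = y`; it is the Lucas sequence `Uₙ(x + y, xy)`. -/
def powDividedDiff {R : Type*} [Semiring R] (x y : R) (n : ℕ) : R :=
  ∑ i ∈ range n, x ^ i * y ^ (n - 1 - i)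

lemma powDividedDiff_zero {R : Type*} [Semiring R] (x y : R) : powDividedDiff x y 0 = 0 :=
  sum_range_zero _

lemma powDividedDiff_one {R : Type*} [Semiring R] (x y : R) : powDividedDiff x y 1 = 1 := by
  simp [powDividedDiff]

section CommRing

variable {R : Type*} [CommRing R] (x y : R) (n : ℕ)

lemma powDividedDiff_mul_sub : powDividedDiff x y n * (x - y) = x ^ n - y ^ n :=
  (Commute.all x y).geom_sum₂_mul n

lemma powDividedDiff_succ : powDividedDiff x y (n + 1) = x ^ n + y * powDividedDiff x y n :=
  (Commute.all x y).geom_sum₂_succ_eq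

lemma powDividedDiff_add_two :
    powDividedDiff x y (n + 2) =
      (x + y) * powDividedDiff x y (n + 1) - x * y * powDividedDiff x y n := by
  linear_combination powDividedDiff_succ x y (n + 1) - x * powDividedDiff_succ x y n

lemma companion_pow_succ :
    !![x + y, -(x * y); 1, 0] ^ (n + 1) =
      !![powDividedDiff x y (n + 2), -(x * y) * powDividedDiff x y (n + 1);
         powDividedDiff x y (n + 1), -(x * y) * powDividedDiff x y n] := by
  induction n with
  | zero => simp [powDividedDiff_add_two, powDividedDiff_one, powDividedDiff_zero]
  | succ n ih =>
    rw [pow_succ', ih, mul_fin_two, powDividedDiff_add_two x y (n + 1),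
      powDividedDiff_add_two x y n]
    congr! 3 <;> ring_nf

end CommRing

lemma norm_powDividedDiff_le {R : Type*} [SeminormedRing R] [NormOneClass R] {x y : R} {ρ : ℝ}
    (hx : ‖x‖ ≤ ρ) (hy : ‖y‖ ≤ ρ) (n : ℕ) :
    ‖powDividedDiff x y n‖ ≤ n * ρ ^ (n - 1) := by
  have hterm : ∀ i ∈ range n, ‖x ^ i * y ^ (n - 1 - i)‖ ≤ ρ ^ (n - 1) := by
    intro i hi
    have hρ : 0 ≤ ρ := (norm_nonneg x).trans hx
    calc ‖x ^ i * y ^ (n - 1 - i)‖ ≤ ‖x ^ i‖ * ‖y ^ (n - 1 - i)‖ := norm_mul_le _ _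
      _ ≤ ‖x‖ ^ i * ‖y‖ ^ (n - 1 - i) := by gcongr <;> exact norm_pow_le _ _
      _ ≤ ρ ^ i * ρ ^ (n - 1 - i) := by gcongr
      _ = ρ ^ (n - 1) := by rw [← pow_add, Nat.add_sub_cancel' (by grind)]
  simpa [powDividedDiff] using norm_sum_le_of_le _ hterm

lemma norm_powDividedDiff_le_div {K : Type*} [NormedField K] {x y : K} {ρ : ℝ} (hxy : x ≠ y)
    (hx : ‖x‖ ≤ ρ) (hy : ‖y‖ ≤ ρ) (n : ℕ) :
    ‖powDividedDiff x y n‖ ≤ 2 * ρ ^ n / ‖x - y‖ := by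
  rw [le_div_iff₀ (norm_sub_pos_iff.2 hxy), ← norm_mul, powDividedDiff_mul_sub]
  calc ‖x ^ n - y ^ n‖ ≤ ‖x ^ n‖ + ‖y ^ n‖ := norm_sub_le _ _
    _ = ‖x‖ ^ n + ‖y‖ ^ n := by rw [norm_pow, norm_pow]
    _ ≤ ρ ^ n + ρ ^ n := by gcongr
    _ = 2 * ρ ^ n := (two_mul _).symm

end DividedDifference

lemma mem_spectrum_fin_two_iff {K : Type*} [Field K] (M : Matrix (Fin 2) (Fin 2) K) (z : K) :
    z ∈ spectrum K M ↔ z * z - M.trace * z + M.det = 0 := by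
  simp [mem_spectrum_iff_isRoot_charpoly, charpoly_fin_two, sq]

lemma exists_mem_spectrum_add_eq_trace_mul_eq_det {K : Type*} [Field K] [IsAlgClosed K]
    (M : Matrix (Fin 2) (Fin 2) K) :
    ∃ r ∈ spectrum K M, ∃ s ∈ spectrum K M, r + s = M.trace ∧ r * s = M.det := by
  obtain ⟨r, hr⟩ := spectrum.nonempty_of_isAlgClosed_of_finiteDimensional K M
  obtain ⟨s, hs, hsum, hprod⟩ := vieta_formula_quadratic ((mem_spectrum_fin_two_iff M r).1 hr)
  exact ⟨r, hr, s, (mem_spectrum_fin_two_iff M s).2 hs, hsum, hprod⟩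

section SpecRad

variable {n : ℕ} {M : Matrix (Fin n) (Fin n) ℝ}

lemma norm_le_specRad {z : ℂ} (hz : z ∈ spectrum ℂ (M.map (algebraMap ℝ ℂ))) :
    ‖z‖ ≤ specRad M := by
  let _ : NormedRing (Matrix (Fin n) (Fin n) ℂ) := frobeniusNormedRing
  let _ : NormedAlgebra ℂ (Matrix (Fin n) (Fin n) ℂ) := frobeniusNormedAlgebra
  obtain ⟨w, -, hw⟩ := spectrum.exists_nnnorm_eq_spectralRadius_of_nonempty ⟨z, hz⟩
  have hfinite : spectralRadius ℂ (M.map (algebraMap ℝ ℂ)) ≠ ⊤ := hw ▸ ENNReal.coe_ne_top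
  have hle : (‖z‖₊ : ENNReal) ≤ spectralRadius ℂ (M.map (algebraMap ℝ ℂ)) :=
    le_iSup₂ (α := ENNReal) z hz
  exact ENNReal.toReal_mono hfinite hle

lemma specRad_le {c : ℝ} (hc : 0 ≤ c)
    (h : ∀ z ∈ spectrum ℂ (M.map (algebraMap ℝ ℂ)), ‖z‖ ≤ c) : specRad M ≤ c := by
  refine ENNReal.toReal_le_of_le_ofReal hc (iSup₂_le fun z hz => ?_)
  rw [← enorm_eq_nnnorm, ← ofReal_norm]
  exact ENNReal.ofReal_le_ofReal (h z hz)

end SpecRad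

lemma norm_le_one_of_quadratic_eq_zero {t b : ℝ} (hb : b ≤ 1) (ht : |t| ≤ 1 + b) {z : ℂ}
    (hz : z * z - t * z + b = 0) : ‖z‖ ≤ 1 := by
  have hre : z.re * z.re - z.im * z.im - t * z.re + b = 0 := by
    simpa using congrArg Complex.re hz
  have him : z.re * z.im + z.im * z.re - t * z.im = 0 := by
    simpa using congrArg Complex.im hz
  have hcases : z.im * (2 * z.re - t) = 0 := by linear_combination him
  rcases mul_eq_zero.1 hcases with hreal | hvertex
  · have hnorm : ‖z‖ = |z.re| := (Complex.abs_re_eq_norm.2 hreal).symm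
    have hquad : |z.re| ^ 2 + b ≤ (1 + b) * |z.re| := by
      calc |z.re| ^ 2 + b = t * z.re := by
            rw [sq_abs]
            linear_combination hre + z.im * hreal
        _ ≤ |t| * |z.re| := (le_abs_self _).trans_eq (abs_mul _ _)
        _ ≤ (1 + b) * |z.re| := by gcongr
    have hfactor : (|z.re| - 1) * (|z.re| - b) ≤ 0 := by linarith
    by_contra! hgt
    rw [hnorm] at hgt
    exact hfactor.not_gt (mul_pos (sub_pos.2 hgt) (sub_pos.2 (hb.trans_lt hgt)))
  · have hsq : ‖z‖ ^ 2 = b := by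
      rw [Complex.sq_norm, Complex.normSq_apply]
      linear_combination -hre + z.re * hvertex
    exact (sq_le_one_iff₀ (norm_nonneg z)).1 (hsq.trans_le hb)

lemma sqrt_abs_sq_sub_four_mul_eq_norm_sub {r s : ℂ} {t b : ℝ} (hsum : r + s = t)
    (hprod : r * s = b) :
    √|t ^ 2 - 4 * b| = ‖r - s‖ := by
  have hdiscr : ((t ^ 2 - 4 * b : ℝ) : ℂ) = (r - s) ^ 2 := by
    push_cast
    rw [← hsum, ← hprod]
    ring
  rw [← Real.norm_eq_abs, ← Complex.norm_real, hdiscr, norm_pow, Real.sqrt_sq (norm_nonneg _)]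

lemma frobNorm_sq_eq_sum_norm_map_sq {n : ℕ} (M : Matrix (Fin n) (Fin n) ℝ) :
    frobNorm M ^ 2 = ∑ i, ∑ j, ‖M.map (algebraMap ℝ ℂ) i j‖ ^ 2 := by
  rw [frobNorm, Real.sq_sqrt (by positivity)]
  simp

section Momentum

variable {η lam β : ℝ}

lemma momentumMatrix_map_trace :
    ((momentumMatrix η lam β).map (algebraMap ℝ ℂ)).trace = (1 + β - η * lam : ℝ) := by
  simp [momentumMatrix, trace_fin_two]

lemma momentumMatrix_map_det :
    ((momentumMatrix η lam β).map (algebraMap ℝ ℂ)).det = β := by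
  simp [momentumMatrix, det_fin_two]

lemma specRad_momentumMatrix_le_one (hβ : β ≤ 1) (h₀ : 0 ≤ η * lam)
    (h₁ : η * lam ≤ 2 * (1 + β)) : specRad (momentumMatrix η lam β) ≤ 1 := by
  refine specRad_le zero_le_one fun z hz => ?_
  rw [mem_spectrum_fin_two_iff, momentumMatrix_map_trace, momentumMatrix_map_det] at hz
  exact norm_le_one_of_quadratic_eq_zero hβ (abs_le.2 ⟨by linarith, by linarith⟩) hz

variable {r s : ℂ}

lemma momentumMatrix_map_eq_companion (hsum : r + s = (1 + β - η * lam : ℝ)) (hprod : r * s = β) :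
    (momentumMatrix η lam β).map (algebraMap ℝ ℂ) = !![r + s, -(r * s); 1, 0] := by
  rw [hsum, hprod]
  ext i j
  fin_cases i <;> fin_cases j <;> simp [momentumMatrix]

lemma exists_eigenvalues_momentumMatrix (η lam β : ℝ) :
    ∃ r s : ℂ, r + s = (1 + β - η * lam : ℝ) ∧ r * s = β ∧
      ‖r‖ ≤ specRad (momentumMatrix η lam β) ∧ ‖s‖ ≤ specRad (momentumMatrix η lam β) := by
  obtain ⟨r, hr, s, hs, hsum, hprod⟩ :=
    exists_mem_spectrum_add_eq_trace_mul_eq_det ((momentumMatrix η lam β).map (algebraMap ℝ ℂ))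
  exact ⟨r, s, hsum.trans momentumMatrix_map_trace, hprod.trans momentumMatrix_map_det,
    norm_le_specRad hr, norm_le_specRad hs⟩

lemma frobNorm_momentumMatrix_pow_succ_sq_le (hsum : r + s = (1 + β - η * lam : ℝ))
    (hprod : r * s = β) (hr : ‖r‖ ≤ 1) (hs : ‖s‖ ≤ 1) (n : ℕ) :
    frobNorm (momentumMatrix η lam β ^ (n + 1)) ^ 2 ≤
      ‖powDividedDiff r s (n + 2)‖ ^ 2 + 2 * ‖powDividedDiff r s (n + 1)‖ ^ 2 +
        ‖powDividedDiff r s n‖ ^ 2 := by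
  have hpow : (momentumMatrix η lam β ^ (n + 1)).map (algebraMap ℝ ℂ) =
      !![r + s, -(r * s); 1, 0] ^ (n + 1) := by
    rw [← momentumMatrix_map_eq_companion hsum hprod]
    exact map_pow (algebraMap ℝ ℂ).mapMatrix _ _
  have hdet : ‖-(r * s)‖ ≤ 1 := by
    rw [norm_neg, norm_mul]
    exact mul_le_one₀ hr (norm_nonneg s) hs
  have hshrink (w : ℂ) : ‖-(r * s) * w‖ ^ 2 ≤ ‖w‖ ^ 2 := by
    rw [norm_mul]
    gcongr
    exact mul_le_of_le_one_left (norm_nonneg w) hdet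
  rw [frobNorm_sq_eq_sum_norm_map_sq, hpow, companion_pow_succ]
  simp only [Fin.sum_univ_two, of_apply, cons_val_zero, cons_val_one]
  linarith [hshrink (powDividedDiff r s (n + 1)), hshrink (powDividedDiff r s n)]

-- For `k = 1` the exponent `k - 2` truncates to `0`, so this contains the bound `‖A‖_F ≤ 3`.
lemma frobNorm_momentumMatrix_pow_le (hρ : specRad (momentumMatrix η lam β) ≤ 1) {k : ℕ}
    (hk : k ≠ 0) :
    frobNorm (momentumMatrix η lam β ^ k) ≤
      3 * k * specRad (momentumMatrix η lam β) ^ (k - 2) := by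
  obtain ⟨n, rfl⟩ := Nat.exists_eq_succ_of_ne_zero hk
  obtain ⟨r, s, hsum, hprod, hr, hs⟩ := exists_eigenvalues_momentumMatrix η lam β
  set ρ := specRad (momentumMatrix η lam β)
  have hρ₀ : 0 ≤ ρ := (norm_nonneg r).trans hr
  have hentry (j : ℕ) (hj : n ≤ j) : ‖powDividedDiff r s j‖ ≤ j * ρ ^ (n - 1) :=
    (norm_powDividedDiff_le hr hs j).trans <|
      mul_le_mul_of_nonneg_left (pow_le_pow_of_le_one hρ₀ hρ (by lia)) j.cast_nonneg
  refine le_of_sq_le_sq ?_ (by positivity)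
  calc frobNorm (momentumMatrix η lam β ^ (n + 1)) ^ 2
      ≤ ‖powDividedDiff r s (n + 2)‖ ^ 2 + 2 * ‖powDividedDiff r s (n + 1)‖ ^ 2 +
          ‖powDividedDiff r s n‖ ^ 2 :=
        frobNorm_momentumMatrix_pow_succ_sq_le hsum hprod (hr.trans hρ) (hs.trans hρ) n
    _ ≤ ((n + 2 : ℕ) * ρ ^ (n - 1)) ^ 2 + 2 * ((n + 1 : ℕ) * ρ ^ (n - 1)) ^ 2 +
          (n * ρ ^ (n - 1)) ^ 2 := by
        gcongr <;> exact hentry _ (by lia)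
    _ = (4 * (n + 1) ^ 2 + 2) * (ρ ^ (n - 1)) ^ 2 := by push_cast; ring
    _ ≤ (9 * (n + 1) ^ 2) * (ρ ^ (n - 1)) ^ 2 := by
        gcongr
        nlinarith [n.cast_nonneg (α := ℝ)]
    _ = (3 * (n + 1 : ℕ) * ρ ^ (n + 1 - 2)) ^ 2 := by
        rw [Nat.add_sub_add_right n 1 1]
        push_cast
        ring

lemma frobNorm_momentumMatrix_pow_le_of_discr_ne_zero
    (hρ : specRad (momentumMatrix η lam β) ≤ 1) (hΔ : (1 + β - η * lam) ^ 2 - 4 * β ≠ 0) {k : ℕ}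
    (hk : k ≠ 0) :
    frobNorm (momentumMatrix η lam β ^ k) ≤
      4 / √|(1 + β - η * lam) ^ 2 - 4 * β| * specRad (momentumMatrix η lam β) ^ (k - 1) := by
  obtain ⟨n, rfl⟩ := Nat.exists_eq_succ_of_ne_zero hk
  obtain ⟨r, s, hsum, hprod, hr, hs⟩ := exists_eigenvalues_momentumMatrix η lam β
  have hsqrt := sqrt_abs_sq_sub_four_mul_eq_norm_sub hsum hprod
  have hrs : r ≠ s := by
    rw [← norm_sub_pos_iff, ← hsqrt]
    exact Real.sqrt_pos.2 (abs_pos.2 hΔ)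
  rw [hsqrt, Nat.succ_sub_one]
  set ρ := specRad (momentumMatrix η lam β)
  have hρ₀ : 0 ≤ ρ := (norm_nonneg r).trans hr
  have hentry (j : ℕ) (hj : n ≤ j) : ‖powDividedDiff r s j‖ ≤ 2 * ρ ^ n / ‖r - s‖ :=
    calc ‖powDividedDiff r s j‖ ≤ 2 * ρ ^ j / ‖r - s‖ := norm_powDividedDiff_le_div hrs hr hs j
      _ ≤ 2 * ρ ^ n / ‖r - s‖ := by
        gcongr 2 * ?_ / _
        exact pow_le_pow_of_le_one hρ₀ hρ hj
  refine le_of_sq_le_sq ?_ (by positivity)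
  calc frobNorm (momentumMatrix η lam β ^ (n + 1)) ^ 2
      ≤ ‖powDividedDiff r s (n + 2)‖ ^ 2 + 2 * ‖powDividedDiff r s (n + 1)‖ ^ 2 +
          ‖powDividedDiff r s n‖ ^ 2 :=
        frobNorm_momentumMatrix_pow_succ_sq_le hsum hprod (hr.trans hρ) (hs.trans hρ) n
    _ ≤ (2 * ρ ^ n / ‖r - s‖) ^ 2 + 2 * (2 * ρ ^ n / ‖r - s‖) ^ 2 +
          (2 * ρ ^ n / ‖r - s‖) ^ 2 := by
        gcongr <;> exact hentry _ (by lia)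
    _ = (4 / ‖r - s‖ * ρ ^ n) ^ 2 := by ring

end Momentum

theorem momentum_matrix_power_frobenius_bounds_general
    (β lam η : ℝ) (hρ : specRad (momentumMatrix η lam β) ≤ 1) :
    frobNorm (momentumMatrix η lam β) ≤ 3 ∧
    (∀ k : ℕ, 2 ≤ k →
      frobNorm (momentumMatrix η lam β ^ k)
        ≤ 3 * k * specRad (momentumMatrix η lam β) ^ (k - 2)) ∧
    ((1 + β - η * lam) ^ 2 - 4 * β ≠ 0 →
      ∀ k : ℕ, 2 ≤ k →
        frobNorm (momentumMatrix η lam β ^ k)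
          ≤ 4 / Real.sqrt |(1 + β - η * lam) ^ 2 - 4 * β|
            * specRad (momentumMatrix η lam β) ^ (k - 1)) := by
  refine ⟨?_, fun k hk => ?_, fun hΔ k hk => ?_⟩
  · simpa using frobNorm_momentumMatrix_pow_le hρ one_ne_zero
  · exact frobNorm_momentumMatrix_pow_le hρ (by lia)
  · exact frobNorm_momentumMatrix_pow_le_of_discr_ne_zero hρ hΔ (by lia)

/-- Frobenius-norm bounds for powers of the momentum matrix (Lemma B.5 of the paper):
`‖A‖_F ≤ 3`; for `k ≥ 2`, `‖Aᵏ‖_F ≤ 3k ρ(A)^{k−2}`; and if the discriminant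
`Δ² = (1+β−ηλ)² − 4β` is nonzero, `‖Aᵏ‖_F ≤ (4/√|Δ²|) ρ(A)^{k−1}` for `k ≥ 2`. -/
theorem momentum_matrix_power_frobenius_bounds
    (β lam η : ℝ) (hβ₀ : 0 ≤ β) (hβ₁ : β < 1) (hlam : 0 < lam) (hη : 0 < η)
    (hetalam : η * lam ≤ 1) :
    frobNorm (momentumMatrix η lam β) ≤ 3 ∧
    (∀ k : ℕ, 2 ≤ k →
      frobNorm (momentumMatrix η lam β ^ k)
        ≤ 3 * k * specRad (momentumMatrix η lam β) ^ (k - 2)) ∧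
    ((1 + β - η * lam) ^ 2 - 4 * β ≠ 0 →
      ∀ k : ℕ, 2 ≤ k →
        frobNorm (momentumMatrix η lam β ^ k)
          ≤ 4 / Real.sqrt |(1 + β - η * lam) ^ 2 - 4 * β|
            * specRad (momentumMatrix η lam β) ^ (k - 1)) := by
  have hel : 0 ≤ η * lam := (mul_pos hη hlam).le
  exact momentum_matrix_power_frobenius_bounds_general β lam η
    (specRad_momentumMatrix_le_one hβ₁.le hel (by linarith))
end
end

section
/- Let 0 ≤ β < 1, λ > 0, and let η_{t+1} ≥ η_{t+2} ≥ … ≥ η_{t+k} > 0 be nonincreasing step sizes with η_{t+1}λ ≤ (1−√β)² (so every momentum matrix A(η_s, λ, β) for t+1 ≤ s ≤ t+k has real eigenvalues). Then the product of momentum matrices satisfies ‖A(η_{t+k},λ,β)·A(η_{t+k−1},λ,β)···A(η_{t+1},λ,β)‖ ≤ ‖A(η_{t+k},λ,β)···A(η_{t+1},λ,β)‖_F ≤ ‖(A(η_{t+k},λ,β))ᵏ‖_F, i.e., the Frobenius norm of the product is bounded by the Frobenius norm of the k-th power of the momentum matrix with the smallest step size. -/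
open Matrix

noncomputable section

/-- The operator 2-norm of a real matrix. -/
def l2OpNorm {n : ℕ} (M : Matrix (Fin n) (Fin n) ℝ) : ℝ :=
  ‖Matrix.toEuclideanCLM (𝕜 := ℝ) M‖

/-!
Write `r = √β`. The cone `K = {(x, y) | 0 ≤ x, r y ≤ x}` is mapped into itself by every momentum
matrix with `ηλ ≤ (1 - r)²`, since its trace is then at least `2r`, and also by the differences
`A(η') - A(η)` with `η'λ ≤ ηλ`. Replacing each factor of a product by a `K`-larger one makes the
product `K`-larger. As `(1, 0)` and `(0, -1)` lie in `K`, this compares the absolute values of the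
entries in the first row, and the second row of a product is the first row of the product without
its leftmost factor.
-/

section Stabilizer

variable {n R : Type*} [Fintype n] [DecidableEq n]

/-- The matrices that map `K` into itself. When `K` is a cone these are the `K`-nonnegative
matrices, so that `N - M ∈ matrixStabilizer K` says that `M` is below `N` in the order defined
by `K`. -/
def matrixStabilizer [Semiring R] (K : AddSubmonoid (n → R)) : Subsemiring (Matrix n n R) where
  carrier := {M | ∀ v ∈ K, M *ᵥ v ∈ K}
  mul_mem' hM hN v hv := by
    rw [← mulVec_mulVec]
    exact hM _ (hN v hv)
  one_mem' v hv := by rwa [one_mulVec]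
  add_mem' hM hN v hv := by
    rw [add_mulVec]
    exact K.add_mem (hM v hv) (hN v hv)
  zero_mem' v _ := by
    rw [zero_mulVec]
    exact K.zero_mem

theorem mem_matrixStabilizer [Semiring R] {K : AddSubmonoid (n → R)} {M : Matrix n n R} :
    M ∈ matrixStabilizer K ↔ ∀ v ∈ K, M *ᵥ v ∈ K :=
  Iff.rfl

end Stabilizer

theorem pow_length_sub_list_prod_mem {R S : Type*} [Ring R] [SetLike S R] [SubsemiringClass S R]
    {s : S} {b : R} {l : List R} (hl : ∀ a ∈ l, a ∈ s) (hbl : ∀ a ∈ l, b - a ∈ s) :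
    b ^ l.length - l.prod ∈ s := by
  induction l with
  | nil => simp
  | cons a l ih =>
    rw [List.forall_mem_cons] at hl hbl
    have hb : b ∈ s := by simpa using add_mem hbl.1 hl.1
    have telescope : b ^ (a :: l).length - (a :: l).prod =
        (b - a) * b ^ l.length + a * (b ^ l.length - l.prod) := by
      rw [List.length_cons, List.prod_cons, pow_succ']
      noncomm_ring
    rw [telescope]
    exact add_mem (mul_mem hbl.1 (pow_mem hb _)) (mul_mem hl.1 (ih hl.2 hbl.2))

section Norms

variable {n : ℕ}

theorem frobNorm_le_frobNorm_of_abs_le {M N : Matrix (Fin n) (Fin n) ℝ}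
    (h : ∀ i j, |M i j| ≤ |N i j|) : frobNorm M ≤ frobNorm N :=
  Real.sqrt_le_sqrt <| Finset.sum_le_sum fun i _ => Finset.sum_le_sum fun j _ =>
    sq_le_sq.mpr (h i j)

theorem l2OpNorm_le_frobNorm (M : Matrix (Fin n) (Fin n) ℝ) : l2OpNorm M ≤ frobNorm M := by
  refine ContinuousLinearMap.opNorm_le_bound _ (Real.sqrt_nonneg _) fun x => ?_
  rw [frobNorm, EuclideanSpace.norm_eq, EuclideanSpace.norm_eq, ← Real.sqrt_mul (by positivity)]
  simp only [Real.norm_eq_abs, sq_abs, ofLp_toEuclideanCLM]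
  refine Real.sqrt_le_sqrt ?_
  rw [Finset.sum_mul]
  refine Finset.sum_le_sum fun i _ => ?_
  rw [mulVec, dotProduct]
  exact Finset.sum_mul_sq_le_sq_mul_sq _ _ _

end Norms

/-- The cone `{(x, y) | 0 ≤ x, r y ≤ x}`. For `r = √β` it is invariant under the
momentum matrices with `ηλ ≤ (1 - √β)²`. -/
def momentumCone (r : ℝ) : AddSubmonoid (Fin 2 → ℝ) where
  carrier := {v | 0 ≤ v 0 ∧ r * v 1 ≤ v 0}
  add_mem' hv hw := by
    refine ⟨add_nonneg hv.1 hw.1, ?_⟩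
    simpa only [Pi.add_apply, mul_add] using add_le_add hv.2 hw.2
  zero_mem' := by simp

theorem mem_momentumCone {r : ℝ} {v : Fin 2 → ℝ} :
    v ∈ momentumCone r ↔ 0 ≤ v 0 ∧ r * v 1 ≤ v 0 :=
  Iff.rfl

theorem apply_zero_zero_nonneg_of_mem_matrixStabilizer {r : ℝ} {M : Matrix (Fin 2) (Fin 2) ℝ}
    (hM : M ∈ matrixStabilizer (momentumCone r)) : 0 ≤ M 0 0 := by
  have hmem : ![1, 0] ∈ momentumCone r := by simp [mem_momentumCone]
  simpa [mulVec, dotProduct, Fin.sum_univ_two] using (hM _ hmem).1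

theorem apply_zero_one_nonpos_of_mem_matrixStabilizer {r : ℝ} (hr : 0 ≤ r)
    {M : Matrix (Fin 2) (Fin 2) ℝ} (hM : M ∈ matrixStabilizer (momentumCone r)) : M 0 1 ≤ 0 := by
  have hmem : ![0, -1] ∈ momentumCone r := by simp [mem_momentumCone, hr]
  simpa [mulVec, dotProduct, Fin.sum_univ_two] using (hM _ hmem).1

theorem abs_apply_zero_le_of_sub_mem_matrixStabilizer {r : ℝ} (hr : 0 ≤ r)
    {M N : Matrix (Fin 2) (Fin 2) ℝ} (hM : M ∈ matrixStabilizer (momentumCone r))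
    (hMN : N - M ∈ matrixStabilizer (momentumCone r)) (j : Fin 2) : |M 0 j| ≤ |N 0 j| := by
  match j with
  | 0 =>
    exact abs_le_abs_of_nonneg (apply_zero_zero_nonneg_of_mem_matrixStabilizer hM)
      (sub_nonneg.mp (apply_zero_zero_nonneg_of_mem_matrixStabilizer hMN))
  | 1 =>
    exact abs_le_abs_of_nonpos (apply_zero_one_nonpos_of_mem_matrixStabilizer hr hM)
      (sub_nonpos.mp (apply_zero_one_nonpos_of_mem_matrixStabilizer hr hMN))

section MomentumMatrix

variable {β lam : ℝ}

theorem momentumMatrix_mulVec (η : ℝ) (v : Fin 2 → ℝ) :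
    momentumMatrix η lam β *ᵥ v = ![(1 + β - η * lam) * v 0 - β * v 1, v 0] := by
  ext i
  fin_cases i <;> simp [momentumMatrix, mulVec, dotProduct, Fin.sum_univ_two, sub_eq_add_neg]

theorem momentumMatrix_mul_apply_one (η : ℝ) (M : Matrix (Fin 2) (Fin 2) ℝ) (j : Fin 2) :
    (momentumMatrix η lam β * M) 1 j = M 0 j := by
  simp [momentumMatrix, mul_apply, Fin.sum_univ_two]

theorem momentumMatrix_mem_matrixStabilizer (hβ : 0 ≤ β) {η : ℝ}
    (hη : η * lam ≤ (1 - √β) ^ 2) :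
    momentumMatrix η lam β ∈ matrixStabilizer (momentumCone √β) := by
  refine mem_matrixStabilizer.mpr fun v ⟨hx, hyx⟩ => ?_
  rw [momentumMatrix_mulVec, mem_momentumCone]
  simp only [cons_val_zero, cons_val_one]
  have hsq : √β ^ 2 = β := Real.sq_sqrt hβ
  have htrace : 2 * √β ≤ 1 + β - η * lam := by linear_combination hη + hsq
  have hle : √β * v 0 ≤ (1 + β - η * lam) * v 0 - β * v 1 := calc
    √β * v 0 ≤ 2 * √β * v 0 - √β * (√β * v 1) := by
      linear_combination √β * hyx
    _ = 2 * √β * v 0 - β * v 1 := by linear_combination (-v 1) * hsq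
    _ ≤ (1 + β - η * lam) * v 0 - β * v 1 := by gcongr
  exact ⟨(mul_nonneg (Real.sqrt_nonneg β) hx).trans hle, hle⟩

theorem momentumMatrix_sub_mem_matrixStabilizer (r : ℝ) {η η' : ℝ} (h : η' * lam ≤ η * lam) :
    momentumMatrix η' lam β - momentumMatrix η lam β ∈ matrixStabilizer (momentumCone r) := by
  refine mem_matrixStabilizer.mpr fun v ⟨hx, _⟩ => ?_
  have hnonneg : 0 ≤ (η * lam - η' * lam) * v 0 := mul_nonneg (sub_nonneg.mpr h) hx
  rw [sub_mulVec, momentumMatrix_mulVec, momentumMatrix_mulVec, mem_momentumCone]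
  simp only [Pi.sub_apply, cons_val_zero, cons_val_one]
  constructor <;> linarith

theorem abs_momentumMatrix_list_prod_apply_zero_le (hβ : 0 ≤ β) {η₀ : ℝ} {l : List ℝ}
    (hη₀ : ∀ η ∈ l, η₀ * lam ≤ η * lam) (hreal : ∀ η ∈ l, η * lam ≤ (1 - √β) ^ 2) (j : Fin 2) :
    |(l.map (momentumMatrix · lam β)).prod 0 j| ≤
      |(momentumMatrix η₀ lam β ^ l.length) 0 j| := by
  have hmem : ∀ A ∈ l.map (momentumMatrix · lam β), A ∈ matrixStabilizer (momentumCone √β) :=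
    List.forall_mem_map.mpr fun η hη => momentumMatrix_mem_matrixStabilizer hβ (hreal η hη)
  have hsub : ∀ A ∈ l.map (momentumMatrix · lam β),
      momentumMatrix η₀ lam β - A ∈ matrixStabilizer (momentumCone √β) :=
    List.forall_mem_map.mpr fun η hη => momentumMatrix_sub_mem_matrixStabilizer _ (hη₀ η hη)
  have hpow := pow_length_sub_list_prod_mem hmem hsub
  rw [List.length_map] at hpow
  exact abs_apply_zero_le_of_sub_mem_matrixStabilizer (Real.sqrt_nonneg β) (list_prod_mem hmem)
    hpow j

theorem abs_momentumMatrix_list_prod_apply_le (hβ : 0 ≤ β) {η₀ : ℝ} {l : List ℝ}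
    (hη₀ : ∀ η ∈ l, η₀ * lam ≤ η * lam) (hreal : ∀ η ∈ l, η * lam ≤ (1 - √β) ^ 2)
    (i j : Fin 2) :
    |(l.map (momentumMatrix · lam β)).prod i j| ≤
      |(momentumMatrix η₀ lam β ^ l.length) i j| := by
  cases l with
  | nil => simp
  | cons η l =>
    match i with
    | 0 => exact abs_momentumMatrix_list_prod_apply_zero_le hβ hη₀ hreal j
    | 1 =>
      rw [List.map_cons, List.prod_cons, List.length_cons, pow_succ',
        momentumMatrix_mul_apply_one, momentumMatrix_mul_apply_one]
      exact abs_momentumMatrix_list_prod_apply_zero_le hβ (List.forall_mem_cons.mp hη₀).2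
        (List.forall_mem_cons.mp hreal).2 j

end MomentumMatrix

theorem momentum_matrix_product_bound_general {β lam : ℝ} (hβ : 0 ≤ β) {k : ℕ}
    {η : Fin k → ℝ} {η₀ : ℝ} (hη₀ : ∀ i, η₀ * lam ≤ η i * lam)
    (hreal : ∀ i, η i * lam ≤ (1 - √β) ^ 2) :
    l2OpNorm (List.ofFn fun i => momentumMatrix (η i) lam β).reverse.prod ≤
        frobNorm (List.ofFn fun i => momentumMatrix (η i) lam β).reverse.prod ∧
      frobNorm (List.ofFn fun i => momentumMatrix (η i) lam β).reverse.prod ≤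
        frobNorm (momentumMatrix η₀ lam β ^ k) := by
  refine ⟨l2OpNorm_le_frobNorm _, frobNorm_le_frobNorm_of_abs_le fun i j => ?_⟩
  have hentry := abs_momentumMatrix_list_prod_apply_le (l := (List.ofFn η).reverse) hβ
    (by simpa using hη₀) (by simpa using hreal) i j
  rwa [List.map_reverse, List.map_ofFn, List.length_reverse, List.length_ofFn] at hentry

/-- Monotonicity bound for products of momentum matrices with nonincreasing step sizes in
the real-eigenvalue regime (Lemma B.6 of the paper): the product
`A(η_{k-1})⋯A(η_0)` (step sizes `η_0 ≥ … ≥ η_{k-1} > 0`, `η_0 λ ≤ (1−√β)²`) satisfies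
`‖·‖ ≤ ‖·‖_F ≤ ‖A(η_{k-1})ᵏ‖_F`. -/
theorem momentum_matrix_product_bound
    (β lam : ℝ) (hβ₀ : 0 ≤ β) (hβ₁ : β < 1) (hlam : 0 < lam)
    (k : ℕ) (hk : 0 < k) (η : Fin k → ℝ)
    (hpos : ∀ i, 0 < η i)
    (hmono : ∀ i j : Fin k, i ≤ j → η j ≤ η i)
    (hreal : η ⟨0, hk⟩ * lam ≤ (1 - Real.sqrt β) ^ 2) :
    l2OpNorm ((List.ofFn fun i : Fin k => momentumMatrix (η i) lam β).reverse.prod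
        : Matrix (Fin 2) (Fin 2) ℝ)
      ≤ frobNorm ((List.ofFn fun i : Fin k => momentumMatrix (η i) lam β).reverse.prod
        : Matrix (Fin 2) (Fin 2) ℝ) ∧
    frobNorm ((List.ofFn fun i : Fin k => momentumMatrix (η i) lam β).reverse.prod
        : Matrix (Fin 2) (Fin 2) ℝ)
      ≤ frobNorm (momentumMatrix (η ⟨k - 1, by omega⟩) lam β ^ k) := by
  have hmul : ∀ i j : Fin k, i ≤ j → η j * lam ≤ η i * lam := fun i j hij =>
    mul_le_mul_of_nonneg_right (hmono i j hij) hlam.le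
  exact momentum_matrix_product_bound_general hβ₀
    (fun i => hmul i _ (Nat.le_sub_one_of_lt i.isLt))
    (fun i => (hmul _ i (Nat.zero_le i)).trans hreal)
end
end

section
/- Let d ≥ 1, let H be a d×d real symmetric positive definite matrix with eigenvalues λ₁ ≥ … ≥ λ_d > 0, let β ∈ [0,1), σ ≥ 0, T ≥ 1, and let η₀ ≥ η₁ ≥ … ≥ η_{T−1} > 0 be arbitrary positive step sizes. Define the 2d×2d matrices Â_t = [[(1+β)I_d − η_t H, −β I_d],[I_d, 0]] and H̃ = [[H, 0],[0, 0]], and let (N_t)_{t=0}^{T−1} be positive semidefinite 2d×2d matrices with N_t ⪯ σ² H̃. Define C₀ = 0 and C_t = Â_{t−1} C_{t−1} Â_{t−1}ᵀ + η_{t−1}² N_{t−1} for 1 ≤ t ≤ T. Then tr(H̃ C_T) ≤ σ² Σ_{j=1}^{d} Σ_{t=0}^{T−1} λ_j² η_t² ‖A_{T−1}^{(j)} A_{T−2}^{(j)} ⋯ A_{t+1}^{(j)}‖², where A_t^{(j)} = A(η_t, λ_j, β) is the 2×2 momentum matrix and the empty product (for t = T−1) is the 2×2 identity. -/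
open Matrix Finset

noncomputable section

/-- `prodMomentum T η lam β s = A(η_{T−1},λ,β) * ⋯ * A(η_s,λ,β)`
(the identity matrix if `s ≥ T`). -/
def prodMomentum (T : ℕ) (η : ℕ → ℝ) (lam β : ℝ) (s : ℕ) :
    Matrix (Fin 2) (Fin 2) ℝ :=
  ((List.ofFn fun r : Fin T => momentumMatrix (η r) lam β).drop s).reverse.prod

/-!
For a unit eigenvector `x` of `H` with eigenvalue `l`, the two vectors `(x, 0)` and `(0, x)` span a
subspace invariant under every `Âₜᵀ`, which acts on it as the transpose of `A(ηₜ, l, β)`.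
Compressing the recursion to this subspace gives a `2 × 2` Lyapunov recursion whose noise is at most
`σ² ηₜ² l E₀₀` in the Loewner order, and unrolling it bounds the `(0, 0)` entry of the compressed
`C_T` by `σ² l ∑ₜ ηₜ² (Pₜ)₀₀²` with `Pₜ = A_{T-1} ⋯ A_{t+1}`. Finally `tr(H̃ C_T)` is the sum of
these entries over an orthonormal eigenbasis, weighted by the eigenvalues, and an entry of a matrix
is at most its operator norm.
-/

/-- The state-transition product `a (T - 1) * ⋯ * a s` of a time-varying linear recursion, equal to
`1` when `T ≤ s`. It is written with the same list expression as `prodMomentum`, so that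
`prodMomentum` is definitionally its value on a sequence of momentum matrices. -/
def transitionProd {M : Type*} [Monoid M] (a : ℕ → M) (T s : ℕ) : M :=
  ((List.ofFn fun r : Fin T => a r).drop s).reverse.prod

lemma transitionProd_self {M : Type*} [Monoid M] (a : ℕ → M) (T : ℕ) :
    transitionProd a T T = 1 := by
  rw [transitionProd, List.drop_of_length_le (List.length_ofFn).le, List.reverse_nil,
    List.prod_nil]

lemma transitionProd_succ {M : Type*} [Monoid M] (a : ℕ → M) {T s : ℕ} (hs : s ≤ T) :
    transitionProd a (T + 1) s = a T * transitionProd a T s := by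
  simp only [transitionProd]
  rw [List.ofFn_succ', List.concat_eq_append, List.drop_append_of_le_length (by simpa using hs)]
  simp

theorem le_sum_conjugate_of_lyapunov {R : Type*} [Semiring R] [PartialOrder R] [StarRing R]
    [StarOrderedRing R] {a q c : ℕ → R} {T : ℕ} (hzero : c 0 ≤ 0)
    (hrec : ∀ t < T, c (t + 1) ≤ a t * c t * star (a t) + q t) :
    c T ≤ ∑ t ∈ range T,
      transitionProd a T (t + 1) * q t * star (transitionProd a T (t + 1)) := by
  induction T with
  | zero => simpa using hzero
  | succ T ih =>
    have hT := ih fun t ht => hrec t (ht.trans T.lt_succ_self)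
    calc c (T + 1) ≤ a T * c T * star (a T) + q T := hrec T T.lt_succ_self
      _ ≤ a T * (∑ t ∈ range T,
            transitionProd a T (t + 1) * q t * star (transitionProd a T (t + 1))) * star (a T)
          + q T := by gcongr; exact star_right_conjugate_le_conjugate hT (a T)
      _ = _ := by
        rw [sum_range_succ, transitionProd_self, star_one, one_mul, mul_one, mul_sum, sum_mul]
        congr 1
        refine sum_congr rfl fun t ht => ?_
        rw [transitionProd_succ a (mem_range.mp ht), star_mul]
        simp only [mul_assoc]

section Eigenbasis

variable {n R : Type*} [Fintype n] [DecidableEq n] [CommRing R]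
  {H : Matrix n n R} {lam : n → R} {v : n → n → R}

lemma eq_transpose_mul_diagonal_mul_of_eigenbasis
    (heig : ∀ i, H *ᵥ v i = lam i • v i)
    (horth : ∀ i j, v i ⬝ᵥ v j = if i = j then 1 else 0) :
    H = (of v)ᵀ * diagonal lam * of v := by
  have hV : of v * (of v)ᵀ = 1 := by
    ext i j
    exact (horth i j).trans (one_apply ..).symm
  have hHV : H * (of v)ᵀ = (of v)ᵀ * diagonal lam := by
    ext i j
    rw [mul_diagonal, mul_comm]
    exact congrFun (heig j) i
  rw [← hHV, Matrix.mul_assoc, mul_eq_one_comm.mp hV, Matrix.mul_one]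

lemma vecMul_eq_smul_of_eigenbasis
    (heig : ∀ i, H *ᵥ v i = lam i • v i)
    (horth : ∀ i j, v i ⬝ᵥ v j = if i = j then 1 else 0) (i : n) :
    v i ᵥ* H = lam i • v i := by
  have hsymm : Hᵀ = H := by
    rw [eq_transpose_mul_diagonal_mul_of_eigenbasis heig horth]
    simp only [transpose_mul, transpose_transpose, diagonal_transpose, Matrix.mul_assoc]
  rw [← mulVec_transpose, hsymm, heig]

lemma trace_mul_eq_sum_of_eigenbasis
    (heig : ∀ i, H *ᵥ v i = lam i • v i)
    (horth : ∀ i j, v i ⬝ᵥ v j = if i = j then 1 else 0) (A : Matrix n n R) :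
    (H * A).trace = ∑ i, lam i * (v i ⬝ᵥ A *ᵥ v i) := by
  calc (H * A).trace = (diagonal lam * (of v * A * (of v)ᵀ)).trace := by
        rw [eq_transpose_mul_diagonal_mul_of_eigenbasis heig horth, Matrix.mul_assoc,
          Matrix.mul_assoc, trace_mul_comm]
        simp only [Matrix.mul_assoc]
    _ = ∑ i, lam i * (v i ⬝ᵥ A *ᵥ v i) := by
        refine sum_congr rfl fun i _ => ?_
        rw [diag_apply, diagonal_mul, Matrix.mul_assoc]
        rfl

end Eigenbasis

lemma abs_apply_le_l2OpNorm {n : ℕ} (M : Matrix (Fin n) (Fin n) ℝ) (i j : Fin n) :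
    |M i j| ≤ l2OpNorm M := by
  have hentry : toEuclideanCLM (𝕜 := ℝ) M (EuclideanSpace.single j 1) i = M i j := by
    simp [ofLp_toEuclideanCLM]
  calc |M i j| ≤ ‖toEuclideanCLM (𝕜 := ℝ) M (EuclideanSpace.single j 1)‖ := by
        rw [← hentry]
        exact PiLp.norm_apply_le (toEuclideanCLM (𝕜 := ℝ) M _) i
    _ ≤ l2OpNorm M * ‖EuclideanSpace.single j (1 : ℝ)‖ := ContinuousLinearMap.le_opNorm _ _
    _ = l2OpNorm M := by rw [PiLp.norm_single, norm_one, mul_one]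

lemma mul_single_mul_transpose_apply {m n R : Type*} [Fintype n] [DecidableEq n] [CommSemiring R]
    (M : Matrix m n R) (j : n) (c : R) (i : m) :
    (M * Matrix.single j j c * Mᵀ) i i = c * M i j ^ 2 := by
  simp [Matrix.mul_apply, Matrix.single_apply, ite_and]
  ring

section Loewner

open scoped MatrixOrder

lemma mul_mul_transpose_le_mul_mul_transpose {m n : Type*} [Finite m] [Fintype n]
    {A B : Matrix n n ℝ} (hAB : A ≤ B) (K : Matrix m n ℝ) : K * A * Kᵀ ≤ K * B * Kᵀ := by
  rw [le_iff, ← Matrix.sub_mul, ← Matrix.mul_sub, ← conjTranspose_eq_transpose_of_trivial]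
  exact (le_iff.mp hAB).mul_mul_conjTranspose_same K

lemma apply_self_le_apply_self {n : Type*} {A B : Matrix n n ℝ} (hAB : A ≤ B) (i : n) :
    A i i ≤ B i i :=
  sub_nonneg.mp (le_iff.mp hAB).diag_nonneg

end Loewner

section HeavyBall

variable {n : Type*}

/-- The transition matrix `Â = [[(1+β)I − ηH, −βI], [I, 0]]` of one heavy-ball step on the pair of
current and previous iterates. -/
def heavyBallMatrix [DecidableEq n] (H : Matrix n n ℝ) (η β : ℝ) :
    Matrix (n ⊕ n) (n ⊕ n) ℝ :=
  fromBlocks ((1 + β) • 1 - η • H) ((-β) • 1) 1 0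

/-- The lifted Hessian `H̃ = [[H, 0], [0, 0]]`, acting on the current iterate only. -/
def liftedHessian (H : Matrix n n ℝ) : Matrix (n ⊕ n) (n ⊕ n) ℝ :=
  fromBlocks H 0 0 0

/-- The `2 × 2n` matrix with rows `(x, 0)` and `(0, x)`: for a unit vector `x`, the coordinates of
the orthogonal projection onto the plane spanned by its two copies. -/
def modeFrame (x : n → ℝ) : Matrix (Fin 2) (n ⊕ n) ℝ :=
  of ![Sum.elim x 0, Sum.elim 0 x]

lemma modeFrame_zero (x : n → ℝ) : modeFrame x 0 = Sum.elim x (0 : n → ℝ) := rfl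

lemma modeFrame_one (x : n → ℝ) : modeFrame x 1 = Sum.elim (0 : n → ℝ) x := rfl

variable [Fintype n]

lemma modeFrame_mul_heavyBallMatrix [DecidableEq n] {H : Matrix n n ℝ} {x : n → ℝ} {l : ℝ}
    (hx : x ᵥ* H = l • x) (η β : ℝ) :
    modeFrame x * heavyBallMatrix H η β = momentumMatrix η l β * modeFrame x := by
  have hcurrent : Sum.elim x 0 ᵥ* heavyBallMatrix H η β =
      (1 + β - η * l) • Sum.elim x (0 : n → ℝ) + (-β) • Sum.elim (0 : n → ℝ) x := by
    ext (k | k) <;>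
      simp [heavyBallMatrix, vecMul_fromBlocks, vecMul_sub, vecMul_smul, hx, sub_mul, mul_assoc,
        -neg_smul, -smul_neg]
  have hprevious : Sum.elim 0 x ᵥ* heavyBallMatrix H η β = Sum.elim x 0 := by
    ext (k | k) <;> simp [heavyBallMatrix, vecMul_fromBlocks]
  ext i k
  rw [mul_apply_eq_vecMul, Matrix.mul_apply, Fin.sum_univ_two]
  fin_cases i
  · simpa [momentumMatrix, modeFrame_zero, modeFrame_one] using congrFun hcurrent k
  · simpa [momentumMatrix, modeFrame_zero, modeFrame_one] using congrFun hprevious k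

lemma modeFrame_mul_liftedHessian_mul_transpose {H : Matrix n n ℝ} {x : n → ℝ} {l : ℝ}
    (hx : x ᵥ* H = l • x) (hunit : x ⬝ᵥ x = 1) :
    modeFrame x * liftedHessian H * (modeFrame x)ᵀ = Matrix.single 0 0 l := by
  have hcurrent : Sum.elim x 0 ᵥ* liftedHessian H = l • Sum.elim x 0 := by
    ext (k | k) <;> simp [liftedHessian, vecMul_fromBlocks, hx]
  have hprevious : Sum.elim 0 x ᵥ* liftedHessian H = 0 := by
    ext (k | k) <;> simp [liftedHessian, vecMul_fromBlocks]
  ext i k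
  change (modeFrame x * liftedHessian H) i ⬝ᵥ modeFrame x k = _
  rw [mul_apply_eq_vecMul]
  fin_cases i <;> fin_cases k <;>
    simp [modeFrame_zero, modeFrame_one, hcurrent, hprevious, hunit]

lemma modeFrame_mul_mul_transpose_apply_zero_zero (x : n → ℝ) (C : Matrix (n ⊕ n) (n ⊕ n) ℝ) :
    (modeFrame x * C * (modeFrame x)ᵀ) 0 0 = x ⬝ᵥ C.toBlocks₁₁ *ᵥ x := by
  rw [Matrix.mul_assoc]
  change Sum.elim x 0 ⬝ᵥ C *ᵥ Sum.elim x 0 = _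
  rw [← fromBlocks_toBlocks C, fromBlocks_mulVec]
  simp [toBlocks_fromBlocks₁₁]

lemma trace_liftedHessian_mul (H : Matrix n n ℝ) (C : Matrix (n ⊕ n) (n ⊕ n) ℝ) :
    (liftedHessian H * C).trace = (H * C.toBlocks₁₁).trace := by
  conv_lhs => rw [← fromBlocks_toBlocks C, liftedHessian, fromBlocks_multiply]
  simp [trace]

open scoped MatrixOrder

theorem modeFrame_compression_le [DecidableEq n] {H : Matrix n n ℝ} {x : n → ℝ} {l : ℝ}
    (hx : x ᵥ* H = l • x) (hunit : x ⬝ᵥ x = 1) {β σ : ℝ} {T : ℕ} {η : ℕ → ℝ}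
    {N C : ℕ → Matrix (n ⊕ n) (n ⊕ n) ℝ}
    (hN : ∀ t < T, N t ≤ σ ^ 2 • liftedHessian H) (hC0 : C 0 = 0)
    (hCrec : ∀ t < T, C (t + 1) =
      heavyBallMatrix H (η t) β * C t * (heavyBallMatrix H (η t) β)ᵀ + η t ^ 2 • N t) :
    modeFrame x * C T * (modeFrame x)ᵀ ≤ ∑ t ∈ range T, prodMomentum T η l β (t + 1) *
      Matrix.single 0 0 (σ ^ 2 * l * η t ^ 2) * (prodMomentum T η l β (t + 1))ᵀ := by
  refine le_sum_conjugate_of_lyapunov (a := fun t => momentumMatrix (η t) l β)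
    (q := fun t => Matrix.single 0 0 (σ ^ 2 * l * η t ^ 2))
    (c := fun t => modeFrame x * C t * (modeFrame x)ᵀ) (by simp [hC0]) fun t ht => ?_
  have hnoise : modeFrame x * (η t ^ 2 • N t) * (modeFrame x)ᵀ ≤
      Matrix.single 0 0 (σ ^ 2 * l * η t ^ 2) := by
    calc modeFrame x * (η t ^ 2 • N t) * (modeFrame x)ᵀ
        ≤ modeFrame x * (η t ^ 2 • σ ^ 2 • liftedHessian H) * (modeFrame x)ᵀ :=
          mul_mul_transpose_le_mul_mul_transpose
            (smul_le_smul_of_nonneg_left (hN t ht) (sq_nonneg (η t))) _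
      _ = Matrix.single 0 0 (σ ^ 2 * l * η t ^ 2) := by
        simp only [Matrix.mul_smul, Matrix.smul_mul,
          modeFrame_mul_liftedHessian_mul_transpose hx hunit, Matrix.smul_single, smul_eq_mul]
        congr 1
        ring
  have htransport : modeFrame x *
      (heavyBallMatrix H (η t) β * C t * (heavyBallMatrix H (η t) β)ᵀ) * (modeFrame x)ᵀ =
      momentumMatrix (η t) l β * (modeFrame x * C t * (modeFrame x)ᵀ) *
        (momentumMatrix (η t) l β)ᵀ := by
    calc _ = modeFrame x * heavyBallMatrix H (η t) β * C t *
          (modeFrame x * heavyBallMatrix H (η t) β)ᵀ := by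
          simp only [transpose_mul, Matrix.mul_assoc]
      _ = _ := by
        rw [modeFrame_mul_heavyBallMatrix hx]
        simp only [transpose_mul, Matrix.mul_assoc]
  rw [hCrec t ht, Matrix.mul_add, Matrix.add_mul, htransport, star_eq_conjTranspose,
    conjTranspose_eq_transpose_of_trivial]
  gcongr

lemma modeFrame_compression_apply_zero_zero_le [DecidableEq n] {H : Matrix n n ℝ} {x : n → ℝ}
    {l : ℝ} (hx : x ᵥ* H = l • x) (hunit : x ⬝ᵥ x = 1) (hl : 0 ≤ l) {β σ : ℝ} {T : ℕ}
    {η : ℕ → ℝ} {N C : ℕ → Matrix (n ⊕ n) (n ⊕ n) ℝ}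
    (hN : ∀ t < T, N t ≤ σ ^ 2 • liftedHessian H) (hC0 : C 0 = 0)
    (hCrec : ∀ t < T, C (t + 1) =
      heavyBallMatrix H (η t) β * C t * (heavyBallMatrix H (η t) β)ᵀ + η t ^ 2 • N t) :
    (modeFrame x * C T * (modeFrame x)ᵀ) 0 0 ≤
      σ ^ 2 * l * ∑ t ∈ range T, η t ^ 2 * l2OpNorm (prodMomentum T η l β (t + 1)) ^ 2 := by
  refine (apply_self_le_apply_self (modeFrame_compression_le hx hunit hN hC0 hCrec) 0).trans ?_
  rw [Matrix.sum_apply, mul_sum]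
  refine sum_le_sum fun t _ => ?_
  rw [mul_single_mul_transpose_apply, mul_assoc _ (η t ^ 2)]
  gcongr _ * (_ * ?_)
  exact sq_le_sq.mpr ((abs_apply_le_l2OpNorm _ 0 0).trans (le_abs_self _))

theorem shb_variance_matrix_product_bound_general [DecidableEq n] (H : Matrix n n ℝ)
    (lam : n → ℝ) (v : n → n → ℝ) (β σ : ℝ) (T : ℕ) (η : ℕ → ℝ)
    (N C : ℕ → Matrix (n ⊕ n) (n ⊕ n) ℝ)
    (heig : ∀ i, H *ᵥ v i = lam i • v i)
    (horth : ∀ i j, v i ⬝ᵥ v j = if i = j then 1 else 0)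
    (hnonneg : ∀ i, 0 ≤ lam i)
    (hN : ∀ t < T, N t ≤ σ ^ 2 • liftedHessian H)
    (hC0 : C 0 = 0)
    (hCrec : ∀ t < T, C (t + 1) =
      heavyBallMatrix H (η t) β * C t * (heavyBallMatrix H (η t) β)ᵀ + η t ^ 2 • N t) :
    (liftedHessian H * C T).trace ≤ σ ^ 2 * ∑ j, ∑ t ∈ range T,
      lam j ^ 2 * η t ^ 2 * l2OpNorm (prodMomentum T η (lam j) β (t + 1)) ^ 2 := by
  rw [trace_liftedHessian_mul, trace_mul_eq_sum_of_eigenbasis heig horth, mul_sum]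
  refine sum_le_sum fun j _ => ?_
  have hmode := modeFrame_compression_apply_zero_zero_le
    (vecMul_eq_smul_of_eigenbasis heig horth j) (by simp [horth]) (hnonneg j) hN hC0 hCrec
  calc lam j * (v j ⬝ᵥ (C T).toBlocks₁₁ *ᵥ v j)
      = lam j * (modeFrame (v j) * C T * (modeFrame (v j))ᵀ) 0 0 := by
        rw [modeFrame_mul_mul_transpose_apply_zero_zero]
    _ ≤ lam j * (σ ^ 2 * lam j * ∑ t ∈ range T,
          η t ^ 2 * l2OpNorm (prodMomentum T η (lam j) β (t + 1)) ^ 2) :=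
        mul_le_mul_of_nonneg_left hmode (hnonneg j)
    _ = σ ^ 2 * ∑ t ∈ range T,
          lam j ^ 2 * η t ^ 2 * l2OpNorm (prodMomentum T η (lam j) β (t + 1)) ^ 2 := by
        simp only [mul_sum]
        exact sum_congr rfl fun t _ => by ring

end HeavyBall

/-- Lemma B.10 of the paper: the variance recursion is controlled by operator norms of
products of 2×2 momentum matrices:
`tr(H̃ C_T) ≤ σ² Σ_j Σ_t λ_j² η_t² ‖A_{T−1}^{(j)} ⋯ A_{t+1}^{(j)}‖²`. -/
theorem shb_variance_matrix_product_bound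
    (d : ℕ) (hd : 0 < d)
    (H : Matrix (Fin d) (Fin d) ℝ) (lam : Fin d → ℝ) (v : Fin d → (Fin d → ℝ))
    (β σ : ℝ) (hβ₀ : 0 ≤ β) (hβ₁ : β < 1) (hσ : 0 ≤ σ)
    (T : ℕ) (hT : 1 ≤ T) (η : ℕ → ℝ)
    (hηpos : ∀ t, t < T → 0 < η t)
    (hηmono : ∀ s t, s ≤ t → t < T → η t ≤ η s)
    (N Cmat : ℕ → Matrix (Fin d ⊕ Fin d) (Fin d ⊕ Fin d) ℝ)
    -- H symmetric positive definite, orthonormal eigenbasis,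
    -- nonincreasing positive eigenvalues
    (hsymm : H.IsSymm)
    (heig : ∀ i, H.mulVec (v i) = lam i • v i)
    (horth : ∀ i j, v i ⬝ᵥ v j = if i = j then (1 : ℝ) else 0)
    (hmono : ∀ i j : Fin d, i ≤ j → lam j ≤ lam i)
    (hpos : ∀ i, 0 < lam i)
    -- the noise second-moment matrices: 0 ⪯ N_t ⪯ σ² H̃
    (hNpsd : ∀ t, t < T → (N t).PosSemidef)
    (hNle : ∀ t, t < T →
      (σ ^ 2 • (Matrix.fromBlocks H 0 0 0 : Matrix (Fin d ⊕ Fin d) (Fin d ⊕ Fin d) ℝ)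
        - N t).PosSemidef)
    -- the variance recursion C₀ = 0, C_{t+1} = Â_t C_t Â_tᵀ + η_t² N_t
    (hC0 : Cmat 0 = 0)
    (hCrec : ∀ t,
      Cmat (t + 1) =
        (Matrix.fromBlocks ((1 + β) • (1 : Matrix (Fin d) (Fin d) ℝ) - η t • H)
            ((-β) • (1 : Matrix (Fin d) (Fin d) ℝ)) 1 0)
          * Cmat t
          * (Matrix.fromBlocks ((1 + β) • (1 : Matrix (Fin d) (Fin d) ℝ) - η t • H)
            ((-β) • (1 : Matrix (Fin d) (Fin d) ℝ)) 1 0)ᵀ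
        + η t ^ 2 • N t) :
    ((Matrix.fromBlocks H 0 0 0 : Matrix (Fin d ⊕ Fin d) (Fin d ⊕ Fin d) ℝ)
        * Cmat T).trace ≤
      σ ^ 2 * ∑ j : Fin d, ∑ t ∈ Finset.range T,
        (lam j) ^ 2 * (η t) ^ 2 * (l2OpNorm (prodMomentum T η (lam j) β (t + 1))) ^ 2 :=
  shb_variance_matrix_product_bound_general H lam v β σ T η N Cmat heig horth
    (fun i => (hpos i).le) hNle hC0 fun t _ => hCrec t
end
end
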